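/- Let k be an algebraically closed field of characteristic zero and let f ∈ k[x_0, x_1, x_2, x_3] be a squarefree homogeneous polynomial of degree d ≥ 3 whose Hessian polynomial h_f is identically zero. Then either (a) there exists an invertible 4×4 matrix T over k such that f(T·x) is a polynomial in x_0 and x_1 only, and in that case f is a product of d pairwise non-proportional linear forms all vanishing on a common 2-dimensional linear subspace of k^4 (V(f) consists of d distinct planes through a line), or (b) there exists an invertible 4×4 matrix T over k such that g := f(T·x) is a polynomial in x_0, x_1, x_2 only and the partial derivatives ∂g/∂x_0, ∂g/∂x_1, ∂g/∂x_2 are linearly independent over k (V(f) is a cone over a plane curve with vertex exactly a point). -/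

import Mathlib

open MvPolynomial

/-- The Hessian polynomial of a multivariate polynomial: the determinant of the
matrix of second partial derivatives. -/
noncomputable def hessianDet {k : Type*} [CommRing k] {m : ℕ}
    (f : MvPolynomial (Fin m) k) : MvPolynomial (Fin m) k :=
  Matrix.det (Matrix.of fun i j => pderiv i (pderiv j f))

/-
The argument is that of Gordan and Noether. If the Hessian of `f` vanishes, the partial derivatives
of `f` are algebraically dependent. The gradient of a minimal relation between them, divided by the
common factor of its entries, is a vector field `h = (hᵢ)` with `∑ hᵢ ∂ᵢ(∂ⱼf) = 0` and
`∑ hᵢ ∂ᵢhⱼ = 0`. The second identity says that the flow of `h` is `x + t h(x)`, so `h` vanishes at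
`h(x)`: the image of `h` lies in a locus of codimension at least two. In four variables the image
of the rational map `[h]` is thus a curve in `ℙ³`, and its generic fibre is a hypersurface.
An equation `P` of a component of the fibre through a generic point is invariant under the flow, and
comparing degrees shows that the coefficients of the `∂ᵢP` are linear relations between the `hᵢ`;
there are at least two such relations. So all `hᵢ` are combinations of two coprime forms, and
Euler's identity turns `∑ hᵢ ∂ᵢ(∂ⱼf) = 0` into a direction along which `f` is constant. The two
cases of the classification are distinguished by the dimension of the space of such directions.
-/

section Derivations

variable {σ A : Type*} [CommRing A]

lemma pderiv_pderiv_comm (i j : σ) (F : MvPolynomial σ A) :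
    pderiv i (pderiv j F) = pderiv j (pderiv i F) := by
  ext s
  obtain rfl | hij := eq_or_ne i j
  · rfl
  · simp [coeff_pderiv, add_right_comm s, hij, hij.symm, mul_right_comm]

lemma notMem_vars_of_pderiv_eq_zero [NoZeroDivisors A] [CharZero A] {i : σ}
    {F : MvPolynomial σ A} (hF : pderiv i F = 0) : i ∉ F.vars := by
  intro hi
  obtain ⟨s, hs, his⟩ := (mem_vars_iff_mem_support i).1 hi
  have hle : Finsupp.single i 1 ≤ s :=
    Finsupp.single_le_iff.2 (Nat.one_le_iff_ne_zero.2 (Finsupp.mem_support_iff.1 his))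
  have hcoeff := coeff_pderiv (i := i) F (s - Finsupp.single i 1)
  rw [hF, tsub_add_cancel_of_le hle, coeff_zero, eq_comm, mul_eq_zero] at hcoeff
  exact hcoeff.elim (mem_support_iff.1 hs) (Nat.cast_add_one_ne_zero _)

lemma derivation_eq_zero_of_isAlgebraic {B : Type*} [CommRing B] [IsDomain B]
    [IsAddTorsionFree A] [Algebra A B] [FaithfulSMul A B] (D : Derivation A B B) {x : B}
    (hx : IsAlgebraic A x) : D x = 0 := by
  obtain ⟨p, hp0, hpx⟩ := hx
  induction hn : p.natDegree using Nat.strong_induction_on generalizing p with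
  | _ n ih =>
    have hmul : Polynomial.aeval x p.derivative * D x = 0 := by
      rw [← smul_eq_mul, ← D.map_aeval, hpx, map_zero]
    refine (mul_eq_zero.1 hmul).elim (fun hderiv => ?_) id
    have hdeg : p.natDegree ≠ 0 := fun hdeg => by
      rw [Polynomial.eq_C_of_natDegree_eq_zero hdeg] at hpx hp0
      simp_all
    exact ih _ (hn ▸ Polynomial.natDegree_derivative_lt hdeg) _
      (mt Polynomial.derivative_eq_zero.1 hdeg) hderiv rfl

lemma mkDerivation_map {B : Type*} [CommRing B] (φ : A →+* B) (h : σ → MvPolynomial σ A)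
    (F : MvPolynomial σ A) :
    mkDerivation B (fun i => map φ (h i)) (map φ F) = map φ (mkDerivation A h F) := by
  induction F using MvPolynomial.induction_on with
  | C a => simp
  | add P Q hP hQ => simp [hP, hQ]
  | mul_X P i hP => simp [hP]

variable [Fintype σ]

lemma derivation_aeval_eq_sum {B : Type*} [CommRing B] [Algebra A B] (D : Derivation A B B)
    (u : σ → B) (F : MvPolynomial σ A) :
    D (aeval u F) = ∑ i, aeval u (pderiv i F) * D (u i) := by
  classical
  induction F using MvPolynomial.induction_on with
  | C a => simp
  | add P Q hP hQ => simp [hP, hQ, add_mul, Finset.sum_add_distrib]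
  | mul_X P j hP =>
    simp [hP, pderiv_X, Pi.single_apply, apply_ite, add_mul, Finset.sum_add_distrib,
      Finset.mul_sum, mul_assoc]

lemma mkDerivation_eq_sum (h : σ → MvPolynomial σ A) (F : MvPolynomial σ A) :
    mkDerivation A h F = ∑ i, h i * pderiv i F := by
  have hsum := derivation_aeval_eq_sum (mkDerivation A h) X F
  simpa only [mkDerivation_X, aeval_X_left, AlgHom.id_apply, mul_comm (pderiv _ F)] using hsum

end Derivations

section Flow

variable {σ A : Type*} [CommRing A]

/-- The substitution `F ↦ F(x + t h(x))`, as a polynomial in `t`. It is the flow of the vector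
field `∑ hᵢ ∂ᵢ` whenever that field annihilates the `hᵢ`. -/
noncomputable def flow (h : σ → MvPolynomial σ A) :
    MvPolynomial σ A →ₐ[A] Polynomial (MvPolynomial σ A) :=
  aeval fun i => Polynomial.C (X i) + Polynomial.C (h i) * Polynomial.X

variable {h : σ → MvPolynomial σ A}

lemma flow_mul_X (F : MvPolynomial σ A) (i : σ) :
    flow h (F * X i) = flow h F * Polynomial.C (X i) +
      flow h F * Polynomial.C (h i) * Polynomial.X := by
  rw [map_mul, flow, aeval_X, mul_add, mul_assoc]

lemma flow_coeff_zero (F : MvPolynomial σ A) : (flow h F).coeff 0 = F := by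
  induction F using MvPolynomial.induction_on with
  | C a => simp
  | add P Q hP hQ => simp [hP, hQ]
  | mul_X P i hP => simp [flow_mul_X, hP]

lemma flow_injective : Function.Injective (flow h) :=
  Function.LeftInverse.injective (g := (Polynomial.coeff · 0)) flow_coeff_zero

lemma succ_mul_flow_coeff_succ (hh : ∀ i, mkDerivation A h (h i) = 0) (F : MvPolynomial σ A)
    (n : ℕ) : ((n : MvPolynomial σ A) + 1) * (flow h F).coeff (n + 1) =
      mkDerivation A h ((flow h F).coeff n) := by
  induction F using MvPolynomial.induction_on generalizing n with
  | C a => cases n <;> simp [Polynomial.coeff_C]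
  | add P Q hP hQ => simp [hP, hQ, mul_add]
  | mul_X P i hP =>
    cases n with
    | zero =>
      simp only [Nat.cast_zero, zero_add, flow_mul_X, Polynomial.coeff_add, Polynomial.coeff_mul_C,
        Polynomial.coeff_mul_X, Polynomial.mul_coeff_zero, Polynomial.coeff_C_zero, one_mul,
        Polynomial.coeff_X_zero, mul_zero, add_zero, Derivation.leibniz, mkDerivation_X,
        smul_eq_mul, ← hP]
      ring
    | succ n =>
      simp only [Nat.cast_add, Nat.cast_one, flow_mul_X, Polynomial.coeff_add,
        Polynomial.coeff_mul_C, Polynomial.coeff_mul_X, map_add, Derivation.leibniz,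
        mkDerivation_X, smul_eq_mul, ← hP, hh, mul_zero, zero_add]
      ring

lemma flow_eq_C_of_mkDerivation_eq_zero [IsDomain A] [CharZero A]
    (hh : ∀ i, mkDerivation A h (h i) = 0) {F : MvPolynomial σ A}
    (hF : mkDerivation A h F = 0) : flow h F = Polynomial.C F := by
  have hstep (n : ℕ) (hn : mkDerivation A h ((flow h F).coeff n) = 0) :
      (flow h F).coeff (n + 1) = 0 :=
    (mul_eq_zero.1 ((succ_mul_flow_coeff_succ hh F n).trans hn)).resolve_left
      (Nat.cast_add_one_ne_zero n)
  have hcoeff (n : ℕ) : (flow h F).coeff (n + 1) = 0 := by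
    induction n with
    | zero => exact hstep 0 (by rw [flow_coeff_zero, hF])
    | succ n ih => exact hstep (n + 1) (by rw [ih, map_zero])
  ext1 n
  cases n with
  | zero => rw [flow_coeff_zero, Polynomial.coeff_C_zero]
  | succ n => rw [hcoeff, Polynomial.coeff_C_succ]

lemma mkDerivation_eq_zero_of_mul [IsDomain A] [CharZero A]
    (hh : ∀ i, mkDerivation A h (h i) = 0) {P Q : MvPolynomial σ A} (hne : P * Q ≠ 0)
    (hPQ : mkDerivation A h (P * Q) = 0) : mkDerivation A h P = 0 := by
  have hflow := flow_eq_C_of_mkDerivation_eq_zero hh hPQ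
  have hflow_ne {F : MvPolynomial σ A} (hF : F ≠ 0) : flow h F ≠ 0 :=
    (map_ne_zero_iff _ flow_injective).2 hF
  have hdeg : (flow h P).natDegree = 0 := by
    apply_fun Polynomial.natDegree at hflow
    rw [map_mul, Polynomial.natDegree_mul (hflow_ne (left_ne_zero_of_mul hne))
      (hflow_ne (right_ne_zero_of_mul hne)), Polynomial.natDegree_C] at hflow
    exact (Nat.add_eq_zero_iff.1 hflow).1
  have hsucc := succ_mul_flow_coeff_succ hh P 0
  rwa [Polynomial.coeff_eq_zero_of_natDegree_lt (by omega), mul_zero, flow_coeff_zero,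
    eq_comm] at hsucc

lemma coeff_prod_pow_of_natDegree_le_one {R : Type*} [CommSemiring R] (s : Finset σ) (e : σ → ℕ)
    (p : σ → Polynomial R) (hp : ∀ i, (p i).natDegree ≤ 1) :
    (∏ i ∈ s, p i ^ e i).coeff (∑ i ∈ s, e i) = ∏ i ∈ s, (p i).coeff 1 ^ e i := by
  classical
  have hpow (i : σ) : (p i ^ e i).natDegree ≤ e i := by
    simpa using Polynomial.natDegree_pow_le_of_le (e i) (hp i)
  induction s using Finset.induction_on with
  | empty => simp
  | insert i s hi ih =>
    have hprod : (∏ i ∈ s, p i ^ e i).natDegree ≤ ∑ i ∈ s, e i :=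
      (Polynomial.natDegree_prod_le _ _).trans (Finset.sum_le_sum fun i _ => hpow i)
    rw [Finset.prod_insert hi, Finset.sum_insert hi, Finset.prod_insert hi,
      Polynomial.coeff_mul_add_eq_of_natDegree_le (hpow i) hprod, ih]
    congr 1
    simpa using Polynomial.coeff_pow_of_natDegree_le (m := e i) (hp i)

lemma flow_coeff_of_isHomogeneous {F : MvPolynomial σ A} {n : ℕ} (hF : F.IsHomogeneous n) :
    (flow h F).coeff n = aeval h F := by
  conv_lhs => rw [F.as_sum]
  conv_rhs => rw [F.as_sum]
  simp only [map_sum, Polynomial.finsetSum_coeff]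
  refine Finset.sum_congr rfl fun s hs => ?_
  have hlin (i : σ) : (Polynomial.C (X i) + Polynomial.C (h i) * Polynomial.X).natDegree ≤ 1 := by
    compute_degree
  rw [flow, aeval_monomial, aeval_monomial, Finsupp.prod, Finsupp.prod,
    hF.degree_eq_sum_deg_support hs, Polynomial.algebraMap_apply, Polynomial.coeff_C_mul,
    coeff_prod_pow_of_natDegree_le_one _ _ _ hlin]
  simp

/-- Invariance under the flow makes the top coefficient in `t` vanish. -/
lemma aeval_eq_zero_of_mkDerivation_eq_zero [IsDomain A] [CharZero A]
    (hh : ∀ i, mkDerivation A h (h i) = 0) {F : MvPolynomial σ A} {n : ℕ} (hn : n ≠ 0)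
    (hF : F.IsHomogeneous n) (hDF : mkDerivation A h F = 0) : aeval h F = 0 := by
  rw [← flow_coeff_of_isHomogeneous hF, flow_eq_C_of_mkDerivation_eq_zero hh hDF,
    Polynomial.coeff_C_of_ne_zero hn]

end Flow

section HomogeneousFactors

variable {σ A : Type*} [CommRing A]

lemma coeff_aeval_C_X_mul_X (F : MvPolynomial σ A) (n : ℕ) :
    (aeval (fun i => Polynomial.C (X i) * Polynomial.X) F :
      Polynomial (MvPolynomial σ A)).coeff n = homogeneousComponent n F := by
  have hmonomial (s : σ →₀ ℕ) (a : A) :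
      aeval (fun i => Polynomial.C (X i) * Polynomial.X) (monomial s a) =
        Polynomial.monomial s.degree (monomial s a) := by
    rw [aeval_monomial, monomial_eq, ← Polynomial.C_mul_X_pow_eq_monomial, Finsupp.degree_apply]
    simp only [Finsupp.prod, mul_pow, Finset.prod_mul_distrib, Finset.prod_pow_eq_pow_sum,
      Polynomial.C_mul, Polynomial.C_pow, map_prod, mul_assoc, Polynomial.algebraMap_apply,
      algebraMap_eq]
  induction F using MvPolynomial.induction_on' with
  | monomial s a =>
    rw [hmonomial, Polynomial.coeff_monomial,
      homogeneousComponent_of_mem (isHomogeneous_monomial a rfl)]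
    simp only [eq_comm]
  | add P Q hP hQ => rw [map_add, Polynomial.coeff_add, hP, hQ, map_add]

lemma isHomogeneous_of_forall_homogeneousComponent_eq_zero {F : MvPolynomial σ A} {n : ℕ}
    (hF : ∀ m ≠ n, homogeneousComponent m F = 0) : F.IsHomogeneous n := by
  have hself : homogeneousComponent n F = F := by
    conv_rhs => rw [← sum_homogeneousComponent F]
    by_cases hn : n ∈ Finset.range (F.totalDegree + 1)
    · exact (Finset.sum_eq_single_of_mem n hn fun m _ hm => hF m hm).symm
    · rw [homogeneousComponent_eq_zero n F (by simpa using hn)]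
      exact (Finset.sum_eq_zero fun m hm => hF m (ne_of_mem_of_not_mem hm hn)).symm
  exact hself ▸ homogeneousComponent_isHomogeneous n F

lemma exists_isHomogeneous_of_mul [IsDomain A] {P Q : MvPolynomial σ A} {n : ℕ}
    (hne : P * Q ≠ 0) (hPQ : (P * Q).IsHomogeneous n) : ∃ m, P.IsHomogeneous m := by
  obtain ⟨τ, hτ⟩ : ∃ τ : MvPolynomial σ A →ₐ[A] Polynomial (MvPolynomial σ A),
      ∀ F m, (τ F).coeff m = homogeneousComponent m F := ⟨_, coeff_aeval_C_X_mul_X⟩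
  have hτ_ne {F : MvPolynomial σ A} (hF : F ≠ 0) : τ F ≠ 0 := fun hτF => hF <| by
    rw [← sum_homogeneousComponent F]
    exact Finset.sum_eq_zero fun m _ => by rw [← hτ, hτF, Polynomial.coeff_zero]
  have hP := hτ_ne (left_ne_zero_of_mul hne)
  have hQ := hτ_ne (right_ne_zero_of_mul hne)
  have hmonomial : τ P * τ Q = Polynomial.monomial n (P * Q) := by
    ext1 m
    rw [← map_mul, hτ, Polynomial.coeff_monomial,
      homogeneousComponent_of_mem hPQ]
    simp only [eq_comm]
  have hdeg := Polynomial.natDegree_mul hP hQ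
  have htrailing := Polynomial.natTrailingDegree_mul hP hQ
  rw [hmonomial, Polynomial.natDegree_monomial_eq _ hne] at hdeg
  rw [hmonomial, Polynomial.natTrailingDegree_monomial hne] at htrailing
  have hleP := Polynomial.natTrailingDegree_le_natDegree (τ P)
  have hleQ := Polynomial.natTrailingDegree_le_natDegree (τ Q)
  refine ⟨(τ P).natDegree, isHomogeneous_of_forall_homogeneousComponent_eq_zero fun m hm => ?_⟩
  rw [← hτ]
  obtain hlt | hgt := lt_or_gt_of_ne hm
  · exact Polynomial.coeff_eq_zero_of_lt_natTrailingDegree (by omega)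
  · exact Polynomial.coeff_eq_zero_of_natDegree_lt hgt

lemma exists_isHomogeneous_of_dvd [IsDomain A] {P F : MvPolynomial σ A} {n : ℕ} (hF : F ≠ 0)
    (hhom : F.IsHomogeneous n) (hPF : P ∣ F) : ∃ m, P.IsHomogeneous m := by
  obtain ⟨Q, rfl⟩ := hPF
  exact exists_isHomogeneous_of_mul hF hhom

lemma eq_zero_of_dvd_of_degree_lt [IsDomain A] {P F : MvPolynomial σ A} {m n : ℕ}
    (hP : P.IsHomogeneous m) (hF : F.IsHomogeneous n) (hnm : n < m) (hPF : P ∣ F) : F = 0 := by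
  by_contra hne
  have hle := totalDegree_le_of_dvd_of_isDomain hPF hne
  rw [hF.totalDegree hne, hP.totalDegree (ne_zero_of_dvd_ne_zero hne hPF)] at hle
  omega

end HomogeneousFactors

section JacobianCriterion

variable {σ k : Type*} [Fintype σ] [Field k] [CharZero k]

lemma not_algebraicIndependent_of_det_pderiv_eq_zero [DecidableEq σ] {u : σ → MvPolynomial σ k}
    (hdet : (Matrix.of fun i j => pderiv j (u i)).det = 0) : ¬ AlgebraicIndependent k u := by
  intro hind
  obtain ⟨v, hv_ne, hv⟩ := Matrix.exists_mulVec_eq_zero_iff.2 hdet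
  have hu (i : σ) : mkDerivation k v (u i) = 0 := by
    rw [mkDerivation_eq_sum]
    simpa only [Matrix.mulVec, dotProduct, Matrix.of_apply, Pi.zero_apply,
      mul_comm] using congrFun hv i
  have hS (s : Algebra.adjoin k (Set.range u)) : mkDerivation k v (s : MvPolynomial σ k) = 0 :=
    Derivation.eqOn_adjoin (D2 := 0) (by rintro _ ⟨i, rfl⟩; exact hu i) s.2
  let D : Derivation (Algebra.adjoin k (Set.range u)) (MvPolynomial σ k) (MvPolynomial σ k) :=
    Derivation.mk'
      { toFun := mkDerivation k v
        map_add' := map_add _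
        map_smul' := fun s F => by simp [Algebra.smul_def, hS] }
      (mkDerivation k v).leibniz
  have hbasis : IsTranscendenceBasis k u :=
    hind.isTranscendenceBasis_of_lift_trdeg_le_of_finite (by simp [trdeg_of_isDomain])
  refine hv_ne (funext fun i => ?_)
  have hDX : D (X i) = 0 := derivation_eq_zero_of_isAlgebraic D (hbasis.isAlgebraic.isAlgebraic _)
  exact (mkDerivation_X k v i).symm.trans hDX

end JacobianCriterion

section HomogeneousRelations

variable {σ τ k : Type*} [CommRing k]

lemma exists_eq_C_of_isHomogeneous_zero {F : MvPolynomial σ k} (hF : F.IsHomogeneous 0) :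
    ∃ c, F = C c :=
  ⟨_, totalDegree_eq_zero_iff_eq_C.1 ((totalDegree_zero_iff_isHomogeneous σ).2 hF)⟩

lemma exists_eq_sum_C_mul_X [Fintype σ] {F : MvPolynomial σ k} (hF : F.IsHomogeneous 1) :
    ∃ c : σ → k, F = ∑ i, C (c i) * X i := by
  choose c hc using fun i => exists_eq_C_of_isHomogeneous_zero (hF.pderiv (i := i))
  refine ⟨c, ?_⟩
  simp only [← hc, mul_comm _ (X _), hF.sum_X_mul_pderiv, one_smul]

lemma degree_ne_zero_of_aeval_eq_zero {u : τ → MvPolynomial σ k} {R : MvPolynomial τ k} {n : ℕ}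
    (hhom : R.IsHomogeneous n) (hne : R ≠ 0) (hR : aeval u R = 0) : n ≠ 0 := by
  rintro rfl
  obtain ⟨c, rfl⟩ := exists_eq_C_of_isHomogeneous_zero hhom
  rw [aeval_C, algebraMap_eq, C_eq_zero] at hR
  exact hne (by rw [hR, C_0])

lemma homogeneousComponent_aeval {u : τ → MvPolynomial σ k} {e : ℕ} (he : e ≠ 0)
    (hu : ∀ i, (u i).IsHomogeneous e) (R : MvPolynomial τ k) (n : ℕ) :
    homogeneousComponent (e * n) (aeval u R) = aeval u (homogeneousComponent n R) := by
  induction R using MvPolynomial.induction_on' with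
  | monomial s a =>
    have hs : (monomial s a).IsHomogeneous s.degree := isHomogeneous_monomial a rfl
    rw [homogeneousComponent_of_mem hs, homogeneousComponent_of_mem (hs.aeval _ hu)]
    simp only [mul_right_inj' he, apply_ite (aeval u), map_zero]
  | add P Q hP hQ => simp only [map_add, hP, hQ]

lemma homogeneousComponent_mem_supported {s : Set τ} {R : MvPolynomial τ k}
    (hR : R ∈ supported k s) (n : ℕ) : homogeneousComponent n R ∈ supported k s := by
  rw [mem_supported] at hR ⊢
  intro i hi
  obtain ⟨d, hd, hid⟩ := (mem_vars_iff_mem_support i).1 hi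
  rw [support_homogeneousComponent] at hd
  exact hR ((mem_vars_iff_mem_support i).2 ⟨d, Finset.mem_of_mem_filter d hd, hid⟩)

lemma pderiv_mem_supported {s : Set τ} {R : MvPolynomial τ k} (hR : R ∈ supported k s) (i : τ) :
    pderiv i R ∈ supported k s := by
  classical
  rw [supported_eq_adjoin_X] at hR
  induction hR using Algebra.adjoin_induction with
  | mem _ hx =>
    obtain ⟨j, -, rfl⟩ := hx
    rw [pderiv_X, Pi.single_apply]
    split_ifs
    exacts [one_mem _, zero_mem _]
  | algebraMap a => simp
  | add _ _ _ _ hx hy => rw [map_add]; exact add_mem hx hy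
  | mul x y hx hy hx' hy' =>
    rw [pderiv_mul]
    exact add_mem (mul_mem hx' hy) (mul_mem hx hy')

lemma exists_isHomogeneous_relation {u : τ → MvPolynomial σ k} {e : ℕ}
    (he : e ≠ 0) (hu : ∀ i, (u i).IsHomogeneous e) {s : Set τ} (hs : ¬ AlgebraicIndepOn k u s) :
    ∃ (n : ℕ) (R : MvPolynomial τ k), R.IsHomogeneous n ∧ R ∈ supported k s ∧ R ≠ 0 ∧
      aeval u R = 0 := by
  obtain ⟨R, hRs, hR, hne⟩ : ∃ R ∈ supported k s, aeval u R = 0 ∧ R ≠ 0 := by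
    by_contra! hcon
    exact hs (algebraicIndependent_comp_subtype.2 hcon)
  obtain ⟨n, -, hn⟩ : ∃ n ∈ Finset.range (R.totalDegree + 1), homogeneousComponent n R ≠ 0 :=
    Finset.exists_ne_zero_of_sum_ne_zero (by rwa [sum_homogeneousComponent])
  refine ⟨n, _, homogeneousComponent_isHomogeneous n R,
    homogeneousComponent_mem_supported hRs n, hn, ?_⟩
  rw [← homogeneousComponent_aeval he hu, hR, map_zero]

/-- A homogeneous relation of minimal degree has this property. -/
lemma exists_isHomogeneous_relation_pderiv_eq_zero {u : τ → MvPolynomial σ k} {e : ℕ}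
    (he : e ≠ 0) (hu : ∀ i, (u i).IsHomogeneous e) {s : Set τ} (hs : ¬ AlgebraicIndepOn k u s) :
    ∃ (n : ℕ) (R : MvPolynomial τ k), R.IsHomogeneous n ∧ R ∈ supported k s ∧ R ≠ 0 ∧
      aeval u R = 0 ∧ ∀ i, aeval u (pderiv i R) = 0 → pderiv i R = 0 := by
  classical
  have hex := exists_isHomogeneous_relation he hu hs
  obtain ⟨R, hhom, hRs, hne, hR⟩ := Nat.find_spec hex
  refine ⟨Nat.find hex, R, hhom, hRs, hne, hR, fun i hi => ?_⟩
  by_contra hpderiv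
  have hpos : Nat.find hex ≠ 0 := fun h0 => hpderiv <| by
    obtain ⟨c, hc⟩ := exists_eq_C_of_isHomogeneous_zero (h0 ▸ hhom)
    rw [hc, pderiv_C]
  exact Nat.find_min hex (Nat.sub_one_lt hpos)
    ⟨_, hhom.pderiv, pderiv_mem_supported hRs i, hpderiv, hi⟩

lemma exists_isHomogeneous_relation_aeval_pderiv_ne_zero [IsDomain k] [CharZero k]
    {u : τ → MvPolynomial σ k} {e : ℕ} (he : e ≠ 0) (hu : ∀ i, (u i).IsHomogeneous e)
    {s : Set τ} {j : τ} (hs : AlgebraicIndepOn k u s)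
    (hj : ¬ AlgebraicIndepOn k u (insert j s)) :
    ∃ (n : ℕ) (R : MvPolynomial τ k), R.IsHomogeneous n ∧ R ∈ supported k (insert j s) ∧
      aeval u R = 0 ∧ aeval u (pderiv j R) ≠ 0 := by
  obtain ⟨n, R, hhom, hRs, hne, hR, hmin⟩ := exists_isHomogeneous_relation_pderiv_eq_zero he hu hj
  refine ⟨n, R, hhom, hRs, hR, fun hpderiv => hne ?_⟩
  refine algebraicIndependent_comp_subtype.1 hs R (mem_supported.2 fun i hi => ?_) hR
  refine (mem_supported.1 hRs hi).resolve_left ?_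
  rintro rfl
  exact notMem_vars_of_pderiv_eq_zero (hmin i hpderiv) hi

lemma eq_zero_of_forall_pderiv_eq_zero [Finite σ] [IsDomain k] [CharZero k] {F : MvPolynomial σ k}
    {n : ℕ} (hn : n ≠ 0) (hF : F.IsHomogeneous n) (hpderiv : ∀ i, pderiv i F = 0) : F = 0 := by
  cases nonempty_fintype σ
  have heuler := hF.sum_X_mul_pderiv
  simp only [hpderiv, mul_zero, Finset.sum_const_zero] at heuler
  exact (smul_eq_zero.1 heuler.symm).resolve_left hn

end HomogeneousRelations

section SelfVanishing

variable {σ k : Type*} [Field k]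

/-- A reduced self-vanishing system of degree `e`, in the terminology of Gordan and Noether:
forms `hᵢ` of degree `e` without a common factor which are annihilated by the vector field
`∑ hᵢ ∂ᵢ`. -/
structure IsReducedSelfVanishing (h : σ → MvPolynomial σ k) (e : ℕ) : Prop where
  isHomogeneous : ∀ i, (h i).IsHomogeneous e
  isUnit_of_dvd : ∀ c, (∀ i, c ∣ h i) → IsUnit c
  mkDerivation_self : ∀ i, mkDerivation k h (h i) = 0

lemma IsReducedSelfVanishing.exists_ne_zero {h : σ → MvPolynomial σ k} {e : ℕ}
    (hh : IsReducedSelfVanishing h e) : ∃ i, h i ≠ 0 := by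
  by_contra! hzero
  exact not_isUnit_zero (hh.isUnit_of_dvd 0 fun i => (hzero i).symm ▸ dvd_rfl)

lemma IsReducedSelfVanishing.exists_linearIndependent_pair {h : σ → MvPolynomial σ k} {e : ℕ}
    (hh : IsReducedSelfVanishing h e) (he : e ≠ 0) :
    ∃ i j, LinearIndependent k ![h i, h j] := by
  obtain ⟨i, hi⟩ := hh.exists_ne_zero
  by_contra! hdep
  have hdvd (j : σ) : h i ∣ h j := by
    by_contra hij
    refine hdep i j ((LinearIndependent.pair_iff' hi).2 fun a ha => hij ?_)
    exact ha ▸ dvd_smul_of_dvd a dvd_rfl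
  obtain ⟨c, -, hc⟩ := isUnit_iff_eq_C_of_isReduced.1 (hh.isUnit_of_dvd _ hdvd)
  exact he ((hh.isHomogeneous i).inj_right (hc ▸ isHomogeneous_C σ c) hi)

lemma IsReducedSelfVanishing.aeval_self [CharZero k] {h : σ → MvPolynomial σ k}
    {e : ℕ} (hh : IsReducedSelfVanishing h e) (he : e ≠ 0) (i : σ) : aeval h (h i) = 0 :=
  aeval_eq_zero_of_mkDerivation_eq_zero hh.mkDerivation_self he (hh.isHomogeneous i)
    (hh.mkDerivation_self i)

lemma exists_eq_mul_and_isUnit_of_dvd {R ι : Type*} [CommRing R]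
    [UniqueFactorizationMonoid R] [Finite ι] [Nonempty ι] (g : ι → R) :
    ∃ (r : R) (h : ι → R), (∀ i, g i = r * h i) ∧ ∀ c, (∀ i, c ∣ h i) → IsUnit c := by
  classical
  cases nonempty_fintype ι
  let _ : NormalizationMonoid R :=
    @StrongNormalizationMonoid.toNormalizationMonoid _ _
      UniqueFactorizationMonoid.strongNormalizationMonoid
  let _ : NormalizedGCDMonoid R := UniqueFactorizationMonoid.toNormalizedGCDMonoid R
  obtain ⟨h, hgh, hgcd⟩ := Finset.extract_gcd g Finset.univ_nonempty
  refine ⟨_, h, fun i => hgh i (Finset.mem_univ i), fun c hc => isUnit_of_dvd_one ?_⟩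
  exact hgcd ▸ Finset.dvd_gcd fun i _ => hc i

lemma exists_isReducedSelfVanishing_mul_eq [Finite σ] [CharZero k] {g : σ → MvPolynomial σ k}
    {N : ℕ} (hhom : ∀ i, (g i).IsHomogeneous N) (hne : ∃ i, g i ≠ 0)
    (hg : ∀ i, mkDerivation k g (g i) = 0) :
    ∃ (r : MvPolynomial σ k) (e : ℕ) (h : σ → MvPolynomial σ k),
      IsReducedSelfVanishing h e ∧ r ≠ 0 ∧ ∀ i, g i = r * h i := by
  cases nonempty_fintype σ
  obtain ⟨i₀, hi₀⟩ := hne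
  have : Nonempty σ := ⟨i₀⟩
  obtain ⟨r, h, hgh, hunit⟩ := exists_eq_mul_and_isUnit_of_dvd g
  have hr : r ≠ 0 := left_ne_zero_of_mul (hgh i₀ ▸ hi₀)
  obtain ⟨m, hm⟩ := exists_isHomogeneous_of_dvd hi₀ (hhom i₀) ⟨_, hgh i₀⟩
  refine ⟨r, N - m, h, ⟨fun i => ?_, hunit, fun i => ?_⟩, hr, hgh⟩ <;>
    obtain hi | hi := eq_or_ne (h i) 0
  · exact hi ▸ isHomogeneous_zero _ _ _
  · have hgi : g i ≠ 0 := hgh i ▸ mul_ne_zero hr hi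
    obtain ⟨n, hn⟩ := exists_isHomogeneous_of_dvd hgi (hhom i) ⟨r, by rw [hgh, mul_comm]⟩
    have hdeg : m + n = N := (hm.mul hn).inj_right (hgh i ▸ hhom i) (hgh i ▸ hgi)
    rwa [← hdeg, Nat.add_sub_cancel_left]
  · rw [hi, map_zero]
  · have hfactor : mkDerivation k g (h i) = 0 :=
      mkDerivation_eq_zero_of_mul hg (mul_ne_zero hi hr) (by rw [mul_comm, ← hgh, hg])
    simp only [mkDerivation_eq_sum, hgh, mul_assoc, ← Finset.mul_sum] at hfactor ⊢
    exact (mul_eq_zero.1 hfactor).resolve_left hr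

variable [Fintype σ] [CharZero k]

/-- The field is the gradient of a minimal relation between the partial derivatives of `f`,
evaluated at those partial derivatives. -/
lemma exists_mkDerivation_pderiv_eq_zero [DecidableEq σ] {f : MvPolynomial σ k} {d : ℕ}
    (hd : 2 ≤ d) (hf : f.IsHomogeneous d)
    (hdet : (Matrix.of fun i j => pderiv i (pderiv j f)).det = 0) :
    ∃ (N : ℕ) (g : σ → MvPolynomial σ k), (∀ i, (g i).IsHomogeneous N) ∧ (∃ i, g i ≠ 0) ∧
      (∀ j, mkDerivation k g (pderiv j f) = 0) ∧ ∀ i, mkDerivation k g (g i) = 0 := by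
  set u : σ → MvPolynomial σ k := fun i => pderiv i f
  have hu (i : σ) : (u i).IsHomogeneous (d - 1) := hf.pderiv
  have hdep : ¬ AlgebraicIndepOn k u Set.univ := by
    rw [AlgebraicIndepOn.univ]
    refine not_algebraicIndependent_of_det_pderiv_eq_zero ?_
    simpa only [u, pderiv_pderiv_comm] using hdet
  obtain ⟨n, R, hhom, -, hR_ne, hR, hmin⟩ :=
    exists_isHomogeneous_relation_pderiv_eq_zero (by omega) hu hdep
  have hgu (j : σ) : mkDerivation k (fun i => aeval u (pderiv i R)) (u j) = 0 := by
    have hchain := derivation_aeval_eq_sum (pderiv j) u R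
    rw [hR, map_zero] at hchain
    simp only [mkDerivation_eq_sum, u, pderiv_pderiv_comm _ j] at hchain ⊢
    exact hchain.symm
  refine ⟨(d - 1) * (n - 1), fun i => aeval u (pderiv i R), fun i => hhom.pderiv.aeval _ hu,
    ?_, hgu, fun i => ?_⟩
  · by_contra! hzero
    have hn : n ≠ 0 := degree_ne_zero_of_aeval_eq_zero hhom hR_ne hR
    exact hR_ne (eq_zero_of_forall_pderiv_eq_zero hn hhom fun i => hmin i (hzero i))
  · rw [derivation_aeval_eq_sum]
    exact Finset.sum_eq_zero fun j _ => by rw [hgu, mul_zero]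

lemma exists_isReducedSelfVanishing_of_hessian_eq_zero [DecidableEq σ] {f : MvPolynomial σ k}
    {d : ℕ} (hd : 2 ≤ d) (hf : f.IsHomogeneous d)
    (hdet : (Matrix.of fun i j => pderiv i (pderiv j f)).det = 0) :
    ∃ (e : ℕ) (h : σ → MvPolynomial σ k), IsReducedSelfVanishing h e ∧
      ∀ j, ∑ i, h i * pderiv i (pderiv j f) = 0 := by
  obtain ⟨N, g, hhom, hne, hgf, hg⟩ := exists_mkDerivation_pderiv_eq_zero hd hf hdet
  obtain ⟨r, e, h, hh, hr, hgh⟩ := exists_isReducedSelfVanishing_mul_eq hhom hne hg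
  refine ⟨e, h, hh, fun j => ?_⟩
  have hgfj := hgf j
  simp only [mkDerivation_eq_sum, hgh, mul_assoc, ← Finset.mul_sum] at hgfj
  exact (mul_eq_zero.1 hgfj).resolve_left hr

end SelfVanishing

section BinaryForms

variable {k : Type*} [Field k] [IsAlgClosed k]

lemma exists_eq_prod_natDegree_le_one {p : Polynomial k} {n : ℕ} (hn : n ≠ 0)
    (hp : p.natDegree ≤ n) :
    ∃ q : Fin n → Polynomial k, (∀ i, (q i).natDegree ≤ 1) ∧ p = ∏ i, q i := by
  induction n, Nat.one_le_iff_ne_zero.2 hn using Nat.le_induction generalizing p with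
  | base => exact ⟨fun _ => p, fun _ => hp, by simp⟩
  | succ n hn' ih =>
    have hn₀ : n ≠ 0 := Nat.one_le_iff_ne_zero.1 hn'
    obtain ⟨l, p', hl, hp', rfl⟩ : ∃ l p' : Polynomial k,
        l.natDegree ≤ 1 ∧ p'.natDegree ≤ n ∧ p = l * p' := by
      obtain hdeg | hdeg := hp.lt_or_eq
      · exact ⟨1, p, by simp, Nat.lt_succ_iff.1 hdeg, by rw [one_mul]⟩
      · obtain ⟨r, hr⟩ := IsAlgClosed.exists_root p (by
          rw [Polynomial.degree_eq_natDegree (by rintro rfl; simp at hdeg), hdeg]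
          exact_mod_cast n.succ_ne_zero)
        refine ⟨.X - .C r, p /ₘ (.X - .C r), by simp, ?_, ?_⟩
        · rw [Polynomial.natDegree_divByMonic _ (Polynomial.monic_X_sub_C r), hdeg]
          simp
        · exact (Polynomial.mul_divByMonic_eq_iff_isRoot.2 hr).symm
    obtain ⟨q, hq, rfl⟩ := ih hn₀ hp'
    exact ⟨Fin.cons l q, Fin.cases hl hq, by simp [Fin.prod_univ_succ]⟩

lemma exists_eq_prod_of_isHomogeneous_fin_two {F : MvPolynomial (Fin 2) k} {n : ℕ} (hn : n ≠ 0)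
    (hF : F.IsHomogeneous n) :
    ∃ l : Fin n → MvPolynomial (Fin 2) k, (∀ i, (l i).IsHomogeneous 1) ∧ F = ∏ i, l i := by
  have hdeg : (aeval ![Polynomial.X, 1] F : Polynomial k).natDegree ≤ n := by
    simpa using aeval_natDegree_le F hF.totalDegree_le ![Polynomial.X, 1] (n := 1) (by
      simp [Fin.forall_fin_two])
  obtain ⟨q, hq, hFq⟩ := exists_eq_prod_natDegree_le_one hn hdeg
  refine ⟨fun i => (q i).homogenize 1, fun i => Polynomial.isHomogeneous_homogenize _, ?_⟩
  have := Polynomial.homogenize_finsetProd (s := .univ) (n := fun _ => 1) fun i _ => hq i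
  simp only [Finset.sum_const, Finset.card_univ, Fintype.card_fin, smul_eq_mul, mul_one] at this
  rw [← this, Polynomial.homogenize_eq_of_isHomogeneous hF hFq]

end BinaryForms

section AlgebraicIndependence

variable {ι k S : Type*} [Field k] [CommRing S] [Algebra k S]

lemma isAlgebraic_adjoin_image_compl [IsDomain S] {x : ι → S} {j : ι}
    (hx : Algebra.adjoin k (Set.range x) = ⊤) (hindep : AlgebraicIndepOn k x {j}ᶜ)
    (hdep : ¬ AlgebraicIndependent k x) (a : S) :
    IsAlgebraic (Algebra.adjoin k (x '' {j}ᶜ)) a := by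
  have hxj : IsAlgebraic (Algebra.adjoin k (x '' {j}ᶜ)) (x j) := by
    by_contra htrans
    refine hdep (AlgebraicIndepOn.univ.1 ?_)
    rw [← Set.union_compl_self {j}, Set.singleton_union]
    exact (AlgebraicIndepOn.insert_iff (by simp)).2 ⟨hindep, htrans⟩
  refine IsAlgebraic.adjoin_of_forall_isAlgebraic (R := k) (s := Set.range x) ?_
    (isAlgebraic_algebraMap (⟨a, hx ▸ Algebra.mem_top⟩ : Algebra.adjoin k (Set.range x)))
  rintro _ ⟨⟨i, rfl⟩, hi⟩
  obtain rfl : i = j := by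
    by_contra hij
    exact hi ⟨i, hij, rfl⟩
  exact hxj

lemma eq_zero_of_isAlgebraic_adjoin {R A B : Type*} [CommRing R] [CommRing A] [IsDomain A]
    [CommRing B] [Algebra R A] [Algebra R B] {x : ι → A} {s : Set ι} (φ : A →ₐ[R] B)
    (hφ : AlgebraicIndepOn R (φ ∘ x) s) {a : A} (ha : IsAlgebraic (Algebra.adjoin R (x '' s)) a)
    (hφa : φ a = 0) : a = 0 := by
  by_contra hne
  refine Ideal.comap_ne_bot_of_algebraic_mem hne (I := RingHom.ker φ) hφa ha ?_
  rw [eq_bot_iff]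
  rintro ⟨b, hb⟩ hφb
  rw [Set.image_eq_range, Algebra.adjoin_range_eq_range_aeval] at hb
  obtain ⟨P, rfl⟩ := hb
  have hP : aeval (fun i : s => (φ ∘ x) i) P = 0 := by
    simpa [← comp_aeval_apply, Function.comp_def] using hφb
  simp [hφ.eq_zero_of_aeval_eq_zero P hP, Subtype.ext_iff]

lemma eq_zero_of_surjective_of_algebraicIndepOn_compl {B : Type*} [CommRing B] [IsDomain B]
    [Algebra k B] {u : ι → S} {j : ι} (hu : AlgebraicIndepOn k u {j}ᶜ)
    {π : MvPolynomial ι k →ₐ[k] B} (hπ : Function.Surjective π) (hπ' : ¬ Function.Injective π)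
    {φ : B →ₐ[k] S} (hφ : φ.comp π = aeval u) {b : B} (hb : φ b = 0) : b = 0 := by
  have hφX : φ ∘ π ∘ X = u := by
    ext i
    rw [← aeval_X (R := k) u i, ← hφ]
    rfl
  rw [← hφX] at hu
  have hgen : Algebra.adjoin k (Set.range (π ∘ X)) = ⊤ := by
    rwa [Set.range_comp, ← AlgHom.map_adjoin, adjoin_range_X, Algebra.map_top,
      AlgHom.range_eq_top]
  have hdep : ¬ AlgebraicIndependent k (π ∘ X) := by
    rwa [AlgebraicIndependent, ← aeval_unique π]
  have hindep : AlgebraicIndepOn k (π ∘ X) {j}ᶜ := AlgebraicIndependent.of_comp φ hu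
  have halg := isAlgebraic_adjoin_image_compl hgen hindep hdep b
  exact eq_zero_of_isAlgebraic_adjoin φ hu halg hb

lemma dvd_of_prime_of_algebraicIndepOn_compl {u : ι → S} {j : ι}
    (hu : AlgebraicIndepOn k u {j}ᶜ) {F G : MvPolynomial ι k} (hF : Prime F)
    (hFu : aeval u F = 0) (hGu : aeval u G = 0) : F ∣ G := by
  have : (Ideal.span {F}).IsPrime := (Ideal.span_singleton_prime hF.ne_zero).2 hF
  have hker (P : MvPolynomial ι k) (hP : P ∈ Ideal.span {F}) : aeval u P = 0 := by
    obtain ⟨Q, rfl⟩ := Ideal.mem_span_singleton.1 hP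
    rw [map_mul, hFu, zero_mul]
  rw [← Ideal.mem_span_singleton, ← Ideal.Quotient.eq_zero_iff_mem]
  refine eq_zero_of_surjective_of_algebraicIndepOn_compl hu
    (Ideal.Quotient.mkₐ_surjective k (Ideal.span {F})) (fun hinj => hF.ne_zero (hinj ?_))
    (Ideal.Quotient.liftₐ_comp (Ideal.span {F}) (aeval u) hker) hGu
  rw [map_zero]
  exact Ideal.Quotient.eq_zero_iff_mem.2 (Ideal.mem_span_singleton_self F)

lemma not_algebraicIndepOn_compl_of_isUnit_of_dvd [IsDomain S] {κ : Type*} {u : ι → S}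
    {q : κ → MvPolynomial ι k} (hq : ∀ i, aeval u (q i) = 0) (hne : ∃ i, q i ≠ 0)
    (hunit : ∀ c, (∀ i, c ∣ q i) → IsUnit c) (j : ι) : ¬ AlgebraicIndepOn k u {j}ᶜ := by
  intro hu
  obtain ⟨i, hi⟩ := hne
  obtain ⟨F, hFu, hF⟩ := (RingHom.ker_isPrime (aeval u)).exists_mem_prime_of_ne_bot
    (Submodule.ne_bot_iff _ |>.2 ⟨q i, hq i, hi⟩)
  exact hF.not_isUnit (hunit F fun i => dvd_of_prime_of_algebraicIndepOn_compl hu hF hFu (hq i))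

lemma algebraicIndependent_of_linearIndependent_fin_two [IsAlgClosed k] {σ : Type*}
    {u : Fin 2 → MvPolynomial σ k} {e : ℕ} (he : e ≠ 0) (hu : ∀ i, (u i).IsHomogeneous e)
    (hlin : LinearIndependent k u) : AlgebraicIndependent k u := by
  by_contra hdep
  obtain ⟨n, R, hhom, -, hne, hR⟩ :=
    exists_isHomogeneous_relation he hu (AlgebraicIndepOn.univ.not.2 hdep)
  have hn : n ≠ 0 := degree_ne_zero_of_aeval_eq_zero hhom hne hR
  obtain ⟨l, hl, rfl⟩ := exists_eq_prod_of_isHomogeneous_fin_two hn hhom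
  rw [map_prod, Finset.prod_eq_zero_iff] at hR
  obtain ⟨i, -, hi⟩ := hR
  obtain ⟨c, hc⟩ := exists_eq_sum_C_mul_X (hl i)
  have hcu : ∑ j, c j • u j = 0 := by
    simpa [hc, ← smul_eq_C_mul] using hi
  refine hne (Finset.prod_eq_zero (Finset.mem_univ i) ?_)
  simp [hc, Fintype.linearIndependent_iff.1 hlin c hcu]

lemma algebraicIndepOn_pair [IsAlgClosed k] {σ : Type*} {u : ι → MvPolynomial σ k} {e : ℕ}
    (he : e ≠ 0) (hu : ∀ i, (u i).IsHomogeneous e) {i j : ι}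
    (hlin : LinearIndependent k ![u i, u j]) : AlgebraicIndepOn k u {i, j} := by
  have hcomp : u ∘ ![i, j] = ![u i, u j] := by
    ext l : 1
    fin_cases l <;> rfl
  rw [← hcomp] at hlin
  have hij : Function.Injective ![i, j] := .of_comp hlin.injective
  have hindep := algebraicIndependent_of_linearIndependent_fin_two he (fun l => hu _) hlin
  rw [← Matrix.range_cons_cons_empty i j ![]]
  exact (algebraicIndependent_equiv' (Equiv.ofInjective _ hij) rfl).1 hindep

end AlgebraicIndependence

section ImplicitFunction

variable {τ k : Type*} [CommRing k]

lemma aeval_mul_eq_pow_mul_aeval {A : Type*} [CommRing A] [Algebra k A] {R : MvPolynomial τ k}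
    {n : ℕ} (hR : R.IsHomogeneous n) (c : A) (u : τ → A) :
    aeval (fun i => c * u i) R = c ^ n * aeval u R := by
  simp only [aeval_def, eval₂_eq, Finset.mul_sum]
  refine Finset.sum_congr rfl fun s hs => ?_
  rw [hR.degree_eq_sum_deg_support hs]
  simp only [mul_pow, Finset.prod_mul_distrib, Finset.prod_pow_eq_pow_sum]
  ring

lemma exists_aeval_update_eq [DecidableEq τ] {A : Type*} [CommRing A] [Algebra k A] (u : τ → A)
    (j : τ) (δ : A) (R : MvPolynomial τ k) :
    ∃ E, aeval (Function.update u j (u j + δ)) R =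
      aeval u R + δ * (aeval u (pderiv j R) + δ * E) := by
  induction R using MvPolynomial.induction_on with
  | C a => exact ⟨0, by simp⟩
  | add P Q hP hQ =>
    obtain ⟨E, hE⟩ := hP
    obtain ⟨E', hE'⟩ := hQ
    refine ⟨E + E', ?_⟩
    simp only [map_add, hE, hE']
    ring
  | mul_X P i hP =>
    obtain ⟨E, hE⟩ := hP
    obtain rfl | hij := eq_or_ne i j
    · refine ⟨E * u i + aeval u (pderiv i P) + δ * E, ?_⟩
      simp only [map_mul, aeval_X, hE, Function.update_self, pderiv_mul, pderiv_X_self, map_add,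
        map_one]
      ring
    · refine ⟨E * u i, ?_⟩
      simp only [map_mul, aeval_X, hE, Function.update_of_ne hij, pderiv_mul,
        pderiv_X_of_ne hij, mul_zero, add_zero]
      ring

/-- A simple root of `R` in the direction `j` determines the `j`-th projective coordinate from
those in `s`. -/
lemma mul_eq_mul_of_aeval_eq_zero {A B : Type*} [CommRing A] [IsDomain A] [Algebra k A]
    [CommRing B] [IsDomain B] [Algebra k B] (ε : B →ₐ[k] A) {R : MvPolynomial τ k} {n : ℕ}
    (hhom : R.IsHomogeneous n) {s : Set τ} {i₀ j : τ} (hRs : R ∈ supported k (insert j s))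
    {x y : τ → B} (hx : aeval x R = 0) (hy : aeval y R = 0)
    (hxy : ∀ i ∈ s, x i₀ * y i = x i * y i₀) (hε : ∀ i, ε (x i) = ε (y i))
    (hε_ne : ε (y i₀) ≠ 0) (hR : aeval (ε ∘ y) (pderiv j R) ≠ 0) :
    x i₀ * y j = x j * y i₀ := by
  classical
  by_contra hne
  obtain ⟨E, hE⟩ := exists_aeval_update_eq (fun i => x i₀ * y i) j (x j * y i₀ - x i₀ * y j) R
  have hcongr : aeval (Function.update (fun i => x i₀ * y i) j
      (x i₀ * y j + (x j * y i₀ - x i₀ * y j))) R = aeval (fun i => y i₀ * x i) R := by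
    refine eval₂Hom_congr' rfl (fun i hi _ => ?_) rfl
    obtain rfl | hij := eq_or_ne i j
    · rw [Function.update_self]; ring
    · rw [Function.update_of_ne hij, hxy i ((mem_supported.1 hRs hi).resolve_left hij), mul_comm]
  rw [hcongr, aeval_mul_eq_pow_mul_aeval hhom, aeval_mul_eq_pow_mul_aeval hhom, hx, hy, mul_zero,
    mul_zero, zero_add] at hE
  have hpderiv := (mul_eq_zero.1 hE.symm).resolve_left (sub_ne_zero.2 (Ne.symm hne))
  have hεpderiv := congrArg ε hpderiv
  rw [aeval_mul_eq_pow_mul_aeval hhom.pderiv, map_add, map_mul, map_pow, comp_aeval_apply,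
    map_mul ε _ E, map_sub, map_mul, map_mul, hε, hε, mul_comm (ε (y j)), sub_self, zero_mul,
    add_zero, map_zero] at hεpderiv
  exact mul_ne_zero (pow_ne_zero _ hε_ne) hR hεpderiv

lemma dvd_sub_of_prime_of_aeval_eq_zero {A B : Type*} [CommRing A] [IsDomain A] [Algebra k A]
    [CommRing B] [Algebra k B] {P : B} (hP : Prime P) {ε : B →ₐ[k] A} (hεP : ε P = 0)
    {ξ η : A →ₐ[k] B} (hξ : ε.comp ξ = .id k A) (hη : ε.comp η = .id k A)
    {R : MvPolynomial τ k} {n : ℕ} (hhom : R.IsHomogeneous n) {s : Set τ} {i₀ j : τ}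
    (hRs : R ∈ supported k (insert j s)) {u : τ → A} (hR : aeval u R = 0)
    (hR' : aeval u (pderiv j R) ≠ 0) (hu : u i₀ ≠ 0)
    (hdvd : ∀ i ∈ s, P ∣ ξ (u i₀) * η (u i) - ξ (u i) * η (u i₀)) :
    P ∣ ξ (u i₀) * η (u j) - ξ (u j) * η (u i₀) := by
  have : (Ideal.span {P}).IsPrime := (Ideal.span_singleton_prime hP.ne_zero).2 hP
  let π : B →ₐ[k] B ⧸ Ideal.span {P} := Ideal.Quotient.mkₐ k _
  have hπ {a b : B} : π a = π b ↔ P ∣ a - b := by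
    rw [← Ideal.mem_span_singleton]
    exact Ideal.Quotient.eq
  have hker (a : B) (ha : a ∈ Ideal.span {P}) : ε a = 0 := by
    obtain ⟨b, rfl⟩ := Ideal.mem_span_singleton.1 ha
    rw [map_mul, hεP, zero_mul]
  let ε' : B ⧸ Ideal.span {P} →ₐ[k] A := Ideal.Quotient.liftₐ _ ε hker
  have hε'ξ (a : A) : ε' (π (ξ a)) = a := AlgHom.congr_fun hξ a
  have hε'η (a : A) : ε' (π (η a)) = a := AlgHom.congr_fun hη a
  have hroot (ζ : A →ₐ[k] B) : aeval (fun i => π (ζ (u i))) R = 0 := by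
    have := comp_aeval_apply (π.comp ζ) (f := u) R
    rw [hR, map_zero] at this
    exact this.symm
  rw [← hπ, map_mul, map_mul]
  refine mul_eq_mul_of_aeval_eq_zero ε' hhom hRs (hroot ξ) (hroot η) (fun i hi => ?_)
    (fun i => (hε'ξ _).trans (hε'η _).symm) (by rwa [hε'η]) ?_
  · rw [← map_mul, ← map_mul, hπ]
    exact hdvd i hi
  · rwa [show (ε' ∘ fun i => π (η (u i))) = u from funext fun i => hε'η (u i)]

end ImplicitFunction

section Fibres

variable {σ k : Type*} [Field k]

/-- The minors `hᵢ(x) hⱼ(y) - hⱼ(x) hᵢ(y)`, which cut out the fibre of the rational map `h`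
through the generic point `y`. The variables `x` are the outer ones; the coordinates of `y` are
the variables of the coefficient ring. -/
noncomputable def fibreMinor (h : σ → MvPolynomial σ k) (i j : σ) :
    MvPolynomial σ (MvPolynomial σ k) :=
  map C (h i) * C (h j) - map C (h j) * C (h i)

/-- `P(x, y)` is a form of degree `m` in `x` defining a component through `y` of the fibre of `h`
through `y`, when that fibre is a hypersurface: `P` is prime, vanishes for `x = y`, divides all
`fibreMinor`s, and is a first integral of the vector field `∑ hᵢ(x) ∂/∂xᵢ`. -/
structure IsFibreComponent (h : σ → MvPolynomial σ k) (P : MvPolynomial σ (MvPolynomial σ k))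
    (m : ℕ) : Prop where
  prime : Prime P
  isHomogeneous : P.IsHomogeneous m
  eval_X : eval X P = 0
  dvd_fibreMinor : ∀ i j, P ∣ fibreMinor h i j
  mkDerivation_eq_zero : mkDerivation (MvPolynomial σ k)
    (fun i => map C (h i) : σ → MvPolynomial σ (MvPolynomial σ k)) P = 0

lemma eval_X_map_C (F : MvPolynomial σ k) :
    eval X (map C F : MvPolynomial σ (MvPolynomial σ k)) = F := by
  rw [eval_map, eval₂_eta]

lemma map_eval_map_C (b : σ → k) (F : MvPolynomial σ k) :
    map (eval b) (map C F : MvPolynomial σ (MvPolynomial σ k)) = F := by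
  rw [map_map, show (eval b).comp C = RingHom.id k by ext; simp, map_id]

lemma eval_X_fibreMinor (h : σ → MvPolynomial σ k) (i j : σ) : eval X (fibreMinor h i j) = 0 := by
  rw [fibreMinor, map_sub, map_mul, map_mul, eval_X_map_C, eval_X_map_C, eval_C, eval_C, mul_comm,
    sub_self]

lemma isHomogeneous_fibreMinor {h : σ → MvPolynomial σ k} {e : ℕ}
    (hh : ∀ i, (h i).IsHomogeneous e) (i j : σ) : (fibreMinor h i j).IsHomogeneous e :=
  (((hh i).map C).mul (isHomogeneous_C σ _)).sub (((hh j).map C).mul (isHomogeneous_C σ _))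

lemma not_dvd_of_eval_X_eq_zero {P Q : MvPolynomial σ (MvPolynomial σ k)} (hP : eval X P = 0)
    (hQ : eval X Q ≠ 0) : ¬ P ∣ Q := by
  rintro ⟨S, rfl⟩
  exact hQ (by rw [map_mul, hP, zero_mul])

lemma dvd_fibreMinor_of_dvd_fibreMinor_left {h : σ → MvPolynomial σ k}
    {P : MvPolynomial σ (MvPolynomial σ k)} (hP : Prime P) (hPX : eval X P = 0) {i₀ : σ}
    (hi₀ : h i₀ ≠ 0) (hdvd : ∀ j, P ∣ fibreMinor h i₀ j) (i j : σ) : P ∣ fibreMinor h i j := by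
  have hmul : C (h i₀) * fibreMinor h i j =
      C (h i) * fibreMinor h i₀ j - C (h j) * fibreMinor h i₀ i := by
    simp only [fibreMinor]
    ring
  have hdvd_mul : P ∣ C (h i₀) * fibreMinor h i j := by
    rw [hmul]
    exact dvd_sub ((hdvd j).mul_left _) ((hdvd i).mul_left _)
  refine (hP.dvd_or_dvd hdvd_mul).resolve_left ?_
  exact not_dvd_of_eval_X_eq_zero hPX (by rwa [eval_C])

lemma dvd_fibreMinor_of_aeval_eq_zero {h : σ → MvPolynomial σ k}
    {P : MvPolynomial σ (MvPolynomial σ k)} (hP : Prime P) (hPX : eval X P = 0)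
    {R : MvPolynomial σ k} {n : ℕ} (hhom : R.IsHomogeneous n) {s : Set σ} {i₀ j : σ}
    (hRs : R ∈ supported k (insert j s)) (hR : aeval h R = 0) (hR' : aeval h (pderiv j R) ≠ 0)
    (hi₀ : h i₀ ≠ 0) (hdvd : ∀ i ∈ s, P ∣ fibreMinor h i₀ i) : P ∣ fibreMinor h i₀ j := by
  let diag : MvPolynomial σ (MvPolynomial σ k) →ₐ[k] MvPolynomial σ k :=
    (aeval (R := MvPolynomial σ k) X).restrictScalars k
  have hdiag (Q : MvPolynomial σ (MvPolynomial σ k)) : diag Q = eval X Q := by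
    rw [← aeval_eq_eval]; rfl
  let inX : MvPolynomial σ k →ₐ[k] MvPolynomial σ (MvPolynomial σ k) :=
    mapAlgHom (Algebra.ofId k _)
  let inY : MvPolynomial σ k →ₐ[k] MvPolynomial σ (MvPolynomial σ k) :=
    (Algebra.ofId (MvPolynomial σ k) _).restrictScalars k
  exact dvd_sub_of_prime_of_aeval_eq_zero hP (ε := diag) (ξ := inX) (η := inY)
    (by rw [hdiag, hPX]) (AlgHom.ext fun F => (hdiag _).trans (eval_X_map_C F))
    (AlgHom.ext fun F => (hdiag _).trans (eval_C F)) hhom hRs hR hR' hi₀ hdvd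

lemma exists_prime_dvd_of_map_eq_zero {R S : Type*} [CommRing R] [UniqueFactorizationMonoid R]
    [CommRing S] [IsDomain S] (φ : R →+* S) {a : R} (ha : a ≠ 0) (hφ : φ a = 0) :
    ∃ p, Prime p ∧ p ∣ a ∧ φ p = 0 := by
  obtain ⟨s, hs, u, hu⟩ := UniqueFactorizationMonoid.exists_prime_factors a ha
  have hprod : (s.map φ).prod = 0 := by
    rw [← hu, map_mul, map_multiset_prod] at hφ
    exact (mul_eq_zero.1 hφ).resolve_right (u.isUnit.map φ).ne_zero
  obtain ⟨p, hps, hp⟩ := Multiset.mem_map.1 (Multiset.prod_eq_zero_iff.1 hprod)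
  exact ⟨p, hs p hps, (Multiset.dvd_prod hps).trans ⟨u, hu.symm⟩, hp⟩

lemma fibreMinor_ne_zero [CharZero k] {h : σ → MvPolynomial σ k} {i j : σ}
    (hlin : LinearIndependent k ![h i, h j]) : fibreMinor h i j ≠ 0 := by
  intro hzero
  obtain ⟨b, hb⟩ : ∃ b, eval b (h i) ≠ 0 := by
    by_contra! hcon
    exact hlin.ne_zero 0 (MvPolynomial.funext fun b => by simpa using hcon b)
  have hrel := congrArg (map (eval b)) hzero
  simp only [fibreMinor, map_sub, map_mul, map_C, map_eval_map_C, map_zero] at hrel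
  refine hb (neg_eq_zero.1 (LinearIndependent.pair_iff.1 hlin (eval b (h j)) (-eval b (h i)) ?_).2)
  rw [smul_eq_C_mul, smul_eq_C_mul, C_neg]
  linear_combination hrel

lemma IsFibreComponent.degree_ne_zero {h : σ → MvPolynomial σ k}
    {P : MvPolynomial σ (MvPolynomial σ k)} {m : ℕ} (hP : IsFibreComponent h P m) : m ≠ 0 := by
  rintro rfl
  obtain ⟨c, rfl⟩ := exists_eq_C_of_isHomogeneous_zero hP.isHomogeneous
  have hc : c = 0 := by simpa using hP.eval_X
  exact hP.prime.ne_zero (by rw [hc, C_0])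

lemma mkDerivation_fibreMinor {h : σ → MvPolynomial σ k}
    (hh : ∀ i, mkDerivation k h (h i) = 0) (i j : σ) :
    mkDerivation (MvPolynomial σ k)
      (fun i => map C (h i) : σ → MvPolynomial σ (MvPolynomial σ k)) (fibreMinor h i j) = 0 := by
  simp only [fibreMinor, map_sub, Derivation.leibniz, mkDerivation_map, hh, map_zero,
    derivation_C, smul_zero, add_zero, sub_zero]

lemma IsFibreComponent.mkDerivation_map_eval {h : σ → MvPolynomial σ k}
    {P : MvPolynomial σ (MvPolynomial σ k)} {m : ℕ} (hP : IsFibreComponent h P m) (b : σ → k) :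
    mkDerivation k h (map (eval b) P) = 0 := by
  have hmap := congrArg (map (eval b)) hP.mkDerivation_eq_zero
  simpa only [← mkDerivation_map, map_eval_map_C, map_zero] using hmap

lemma exists_isFibreComponent [CharZero k] {h : σ → MvPolynomial σ k} {e : ℕ} (he : e ≠ 0)
    (hhom : ∀ i, (h i).IsHomogeneous e) (hh : ∀ i, mkDerivation k h (h i) = 0) {i₀ i₁ : σ}
    (hlin : LinearIndependent k ![h i₀, h i₁]) (hindep : AlgebraicIndepOn k h {i₀, i₁})
    (hdep : ∀ j ∉ ({i₀, i₁} : Set σ), ¬ AlgebraicIndepOn k h (insert j {i₀, i₁})) :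
    ∃ P m, IsFibreComponent h P m := by
  have hne := fibreMinor_ne_zero hlin
  have hi₀ : h i₀ ≠ 0 := hlin.ne_zero 0
  obtain ⟨P, hP, hPdvd, hPX⟩ := exists_prime_dvd_of_map_eq_zero (eval X) hne
    (eval_X_fibreMinor h i₀ i₁)
  obtain ⟨m, hm⟩ := exists_isHomogeneous_of_dvd hne (isHomogeneous_fibreMinor hhom i₀ i₁) hPdvd
  have hpair : ∀ i ∈ ({i₀, i₁} : Set σ), P ∣ fibreMinor h i₀ i := by
    rintro i (rfl | rfl)
    · simp [fibreMinor, mul_comm]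
    · exact hPdvd
  refine ⟨P, m, hP, hm, hPX, dvd_fibreMinor_of_dvd_fibreMinor_left hP hPX hi₀ fun j => ?_, ?_⟩
  · by_cases hj : j ∈ ({i₀, i₁} : Set σ)
    · exact hpair j hj
    · obtain ⟨n, R, hR, hRs, hR₀, hR'⟩ :=
        exists_isHomogeneous_relation_aeval_pderiv_ne_zero he hhom hindep (hdep j hj)
      exact dvd_fibreMinor_of_aeval_eq_zero hP hPX hR hRs hR₀ hR' hi₀ hpair
  · obtain ⟨Q, hQ⟩ := hPdvd
    exact mkDerivation_eq_zero_of_mul (fun i => by rw [mkDerivation_map, hh, map_zero])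
      (hQ ▸ hne) (hQ ▸ mkDerivation_fibreMinor hh i₀ i₁)

lemma IsFibreComponent.exists_pderiv_ne_zero [Finite σ] [CharZero k] {h : σ → MvPolynomial σ k}
    {P : MvPolynomial σ (MvPolynomial σ k)} {m : ℕ} (hP : IsFibreComponent h P m) :
    ∃ j, pderiv j P ≠ 0 := by
  by_contra! hzero
  exact hP.prime.ne_zero (eq_zero_of_forall_pderiv_eq_zero hP.degree_ne_zero hP.isHomogeneous hzero)

lemma IsFibreComponent.eq_zero_of_C_mul_pderiv_eq [Finite σ] [CharZero k] {h : σ → MvPolynomial σ k}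
    {P : MvPolynomial σ (MvPolynomial σ k)} {m : ℕ} (hP : IsFibreComponent h P m) {c : σ → k}
    (hc : ∀ i j, C (C (c j)) * pderiv i P = C (C (c i)) * pderiv j P) : c = 0 := by
  classical
  cases nonempty_fintype σ
  obtain ⟨j, hj⟩ := hP.exists_pderiv_ne_zero
  have heuler : C (C (c j)) * (m • P) = (∑ i, C (C (c i)) * X i) * pderiv j P := by
    rw [← hP.isHomogeneous.sum_X_mul_pderiv, Finset.mul_sum, Finset.sum_mul]
    exact Finset.sum_congr rfl fun i _ => by linear_combination X i * hc i j
  have hdvd : P ∣ ∑ i, C (C (c i)) * X i := by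
    refine (hP.prime.dvd_or_dvd (b := pderiv j P) ?_).resolve_right fun hPj => hj ?_
    · rw [← heuler]
      exact (dvd_smul_of_dvd m dvd_rfl).mul_left _
    · exact eq_zero_of_dvd_of_degree_lt hP.isHomogeneous hP.isHomogeneous.pderiv
        (Nat.sub_lt hP.degree_ne_zero.bot_lt one_pos) hPj
  funext i
  by_contra hci
  refine not_dvd_of_eval_X_eq_zero hP.eval_X (fun hzero => hci ?_) hdvd
  simpa [Pi.single_apply] using congrArg (eval (Pi.single i 1)) hzero

variable [Fintype σ]

lemma IsFibreComponent.sum_C_mul_map_C_pderiv_eq_zero {h : σ → MvPolynomial σ k}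
    {P : MvPolynomial σ (MvPolynomial σ k)} {m : ℕ} (hP : IsFibreComponent h P m) {i₀ : σ}
    (hi₀ : h i₀ ≠ 0) {F : MvPolynomial σ k} (hF : F.IsHomogeneous m)
    (hDF : mkDerivation k h F = 0) :
    ∑ i, C (h i) * map C (pderiv i F) = (0 : MvPolynomial σ (MvPolynomial σ k)) := by
  have hhom : (∑ i, C (h i) * map C (pderiv i F) :
      MvPolynomial σ (MvPolynomial σ k)).IsHomogeneous (m - 1) :=
    IsHomogeneous.sum _ _ _ fun i _ => by
      simpa only [zero_add] using (isHomogeneous_C σ (h i)).mul (hF.pderiv.map C)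
  refine eq_zero_of_dvd_of_degree_lt hP.isHomogeneous hhom
    (Nat.sub_lt hP.degree_ne_zero.bot_lt one_pos) ?_
  have hmul : map C (h i₀) * ∑ i, C (h i) * map C (pderiv i F) =
      ∑ i, fibreMinor h i₀ i * map C (pderiv i F) + C (h i₀) * map C (mkDerivation k h F) := by
    simp only [mkDerivation_eq_sum, map_sum, map_mul, Finset.mul_sum, ← Finset.sum_add_distrib,
      fibreMinor]
    exact Finset.sum_congr rfl fun i _ => by ring
  have hdvd : P ∣ map C (h i₀) * ∑ i, C (h i) * map C (pderiv i F) := by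
    rw [hmul, hDF, map_zero, mul_zero, add_zero]
    exact Finset.dvd_sum fun i _ => (hP.dvd_fibreMinor i₀ i).mul_right _
  refine (hP.prime.dvd_or_dvd hdvd).resolve_left ?_
  exact not_dvd_of_eval_X_eq_zero hP.eval_X (by rwa [eval_X_map_C])

lemma IsFibreComponent.coeff_pderiv_map_eval_mem_ker {h : σ → MvPolynomial σ k}
    {P : MvPolynomial σ (MvPolynomial σ k)} {m : ℕ} (hP : IsFibreComponent h P m) {i₀ : σ}
    (hi₀ : h i₀ ≠ 0) (b : σ → k) (s : σ →₀ ℕ) :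
    (fun i => coeff s (pderiv i (map (eval b) P))) ∈
      LinearMap.ker (Fintype.linearCombination k h) := by
  have hzero := congrArg (coeff s) (hP.sum_C_mul_map_C_pderiv_eq_zero hi₀
    (hP.isHomogeneous.map (eval b)) (hP.mkDerivation_map_eval b))
  rw [LinearMap.mem_ker, Fintype.linearCombination_apply]
  simpa only [coeff_sum, coeff_C_mul, coeff_map, coeff_zero, smul_eq_C_mul, mul_comm] using hzero

-- If all relations were multiples of one relation `c`, then `P` would divide the constant linear
-- form `∑ cᵢ xᵢ`, which does not vanish at the generic point `y`.
lemma IsFibreComponent.two_le_finrank_ker [CharZero k] {h : σ → MvPolynomial σ k}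
    {P : MvPolynomial σ (MvPolynomial σ k)} {m : ℕ} (hP : IsFibreComponent h P m) {i₀ : σ}
    (hi₀ : h i₀ ≠ 0) :
    2 ≤ Module.finrank k (LinearMap.ker (Fintype.linearCombination k h)) := by
  by_contra! hlt
  obtain ⟨c, hspan⟩ := finrank_le_one_iff.1 (Nat.lt_succ_iff.1 hlt)
  have hcoeff (b : σ → k) (s : σ →₀ ℕ) :
      ∃ t : k, ∀ i, eval b (coeff s (pderiv i P)) = t * c.1 i := by
    obtain ⟨t, ht⟩ := hspan ⟨_, hP.coeff_pderiv_map_eval_mem_ker hi₀ b s⟩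
    refine ⟨t, fun i => ?_⟩
    rw [← coeff_map, ← pderiv_map]
    exact (congrFun (congrArg Subtype.val ht) i).symm
  have hc : c.1 = 0 := hP.eq_zero_of_C_mul_pderiv_eq fun i j => by
    refine MvPolynomial.ext _ _ fun s => MvPolynomial.funext fun b => ?_
    obtain ⟨t, ht⟩ := hcoeff b s
    rw [coeff_C_mul, coeff_C_mul, map_mul, map_mul, eval_C, eval_C, ht, ht]
    ring
  obtain ⟨j, hj⟩ := hP.exists_pderiv_ne_zero
  refine hj (MvPolynomial.ext _ _ fun s => MvPolynomial.funext fun b => ?_)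
  obtain ⟨t, ht⟩ := hcoeff b s
  rw [ht, hc, Pi.zero_apply, mul_zero, coeff_zero, map_zero]

end Fibres

section Vertex

variable {σ k : Type*} [Field k]

-- By Euler `p a + q b = 0`, so `(a, b) = s (-q, p)`; differentiating again, `p ∣ ∂ⱼp` unless
-- `s = 0`.
lemma eq_zero_of_isRelPrime_of_mul_pderiv_add_mul_pderiv [Finite σ] [CharZero k]
    {p q a b : MvPolynomial σ k} {e m : ℕ} (hp : p.IsHomogeneous e) (hp₀ : p ≠ 0)
    (he : e ≠ 0) (hpq : IsRelPrime p q) (ha : a.IsHomogeneous m) (hb : b.IsHomogeneous m)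
    (hm : m ≠ 0) (hab : ∀ j, p * pderiv j a + q * pderiv j b = 0) : a = 0 ∧ b = 0 := by
  have heuler : p * a + q * b = 0 := by
    cases nonempty_fintype σ
    refine (smul_eq_zero.1 (?_ : m • (p * a + q * b) = 0)).resolve_left hm
    rw [smul_add, ← mul_smul_comm, ← mul_smul_comm, ← ha.sum_X_mul_pderiv, ← hb.sum_X_mul_pderiv,
      Finset.mul_sum, Finset.mul_sum, ← Finset.sum_add_distrib]
    exact Finset.sum_eq_zero fun j _ => by linear_combination X j * hab j
  obtain ⟨s, rfl⟩ : p ∣ b :=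
    hpq.dvd_of_dvd_mul_left ⟨-a, by linear_combination heuler⟩
  obtain rfl : a = -(q * s) := mul_left_cancel₀ hp₀ (by linear_combination heuler)
  obtain rfl | hs := eq_or_ne s 0
  · simp
  refine absurd (eq_zero_of_forall_pderiv_eq_zero he hp fun j => ?_) hp₀
  have hcross : q * pderiv j p = p * pderiv j q := by
    refine mul_left_cancel₀ hs ?_
    have hj := hab j
    simp only [map_neg, pderiv_mul] at hj
    linear_combination hj
  exact eq_zero_of_dvd_of_degree_lt hp hp.pderiv (Nat.sub_lt he.bot_lt one_pos)
    (hpq.dvd_of_dvd_mul_left ⟨_, hcross⟩)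

variable [Fintype σ]

/-- The vertex of the cone `V(f)`: the directions along which the derivative of `f` vanishes
identically. -/
noncomputable def vertex (f : MvPolynomial σ k) : Submodule k (σ → k) :=
  LinearMap.ker (Fintype.linearCombination k fun i => pderiv i f)

lemma mem_vertex {f : MvPolynomial σ k} {a : σ → k} :
    a ∈ vertex f ↔ ∑ i, a i • pderiv i f = 0 := by
  rw [vertex, LinearMap.mem_ker, Fintype.linearCombination_apply]

lemma single_mem_vertex_iff [DecidableEq σ] {f : MvPolynomial σ k} {j : σ} :
    Pi.single j 1 ∈ vertex f ↔ pderiv j f = 0 := by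
  simp [mem_vertex, Pi.single_apply]

lemma vertex_le_of_dvd [CharZero k] {f p : MvPolynomial σ k} (hf : f ≠ 0) (hp : p ∣ f) :
    vertex f ≤ vertex p := by
  obtain ⟨q, rfl⟩ := hp
  intro a ha
  let v : σ → MvPolynomial σ k := fun i => C (a i)
  have hv (F : MvPolynomial σ k) : a ∈ vertex F ↔ mkDerivation k v F = 0 := by
    simp only [v, mem_vertex, mkDerivation_eq_sum, smul_eq_C_mul]
  exact (hv p).2 (mkDerivation_eq_zero_of_mul (fun i => derivation_C _ _) hf ((hv _).1 ha))

lemma eval_eq_zero_of_mem_vertex {l : MvPolynomial σ k} (hl : l.IsHomogeneous 1) {a : σ → k}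
    (ha : a ∈ vertex l) : eval a l = 0 := by
  classical
  obtain ⟨c, rfl⟩ := exists_eq_sum_C_mul_X hl
  simpa [pderiv_X, Pi.single_apply, mul_comm] using congrArg (eval a) (mem_vertex.1 ha)

lemma isHomogeneous_sum_smul_pderiv {f : MvPolynomial σ k} {d : ℕ} (hf : f.IsHomogeneous d)
    (a : σ → k) : (∑ i, a i • pderiv i f).IsHomogeneous (d - 1) :=
  IsHomogeneous.sum _ _ _ fun _ _ => Submodule.smul_mem (homogeneousSubmodule σ k (d - 1)) _
    hf.pderiv

lemma pderiv_sum_smul_pderiv (f : MvPolynomial σ k) (a : σ → k) (j : σ) :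
    pderiv j (∑ i, a i • pderiv i f) = ∑ i, a i • pderiv i (pderiv j f) := by
  simp only [map_sum, Derivation.map_smul, pderiv_pderiv_comm j]

lemma mem_span_pair_of_card_le_finrank_ker_add_two {V : Type*} [AddCommGroup V] [Module k V]
    {v : σ → V} {i j : σ} (hlin : LinearIndependent k ![v i, v j])
    (hker : Fintype.card σ ≤
      Module.finrank k (LinearMap.ker (Fintype.linearCombination k v)) + 2) (l : σ) :
    v l ∈ Submodule.span k {v i, v j} := by
  have hrank := (Fintype.linearCombination k v).finrank_range_add_finrank_ker
  rw [Fintype.range_linearCombination, Module.finrank_fintype_fun_eq_card] at hrank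
  have hpair : Module.finrank k (Submodule.span k {v i, v j}) = 2 := by
    rw [← Matrix.range_cons_cons_empty _ _ ![], finrank_span_eq_card hlin, Fintype.card_fin]
  have hle : Submodule.span k {v i, v j} ≤ Submodule.span k (Set.range v) :=
    Submodule.span_mono (Set.pair_subset ⟨i, rfl⟩ ⟨j, rfl⟩)
  have : FiniteDimensional k (Submodule.span k (Set.range v)) :=
    FiniteDimensional.span_of_finite k (Set.finite_range v)
  rw [Submodule.eq_of_le_of_finrank_le hle (by omega)]
  exact Submodule.subset_span ⟨l, rfl⟩

variable [CharZero k]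

lemma vertex_ne_bot_of_mem_span_pair {f : MvPolynomial σ k} {d : ℕ} (hd : 2 ≤ d)
    (hf : f.IsHomogeneous d) {h : σ → MvPolynomial σ k} {e : ℕ} (he : e ≠ 0)
    (hh : IsReducedSelfVanishing h e) (hhf : ∀ j, ∑ i, h i * pderiv i (pderiv j f) = 0) {i₀ i₁ : σ}
    (hi₀ : h i₀ ≠ 0) (hspan : ∀ i, h i ∈ Submodule.span k {h i₀, h i₁}) : vertex f ≠ ⊥ := by
  choose a b hab using fun i => Submodule.mem_span_pair.1 (hspan i)
  have hrel : IsRelPrime (h i₀) (h i₁) := fun c hc₀ hc₁ => hh.isUnit_of_dvd c fun i => by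
    rw [← hab i]
    exact dvd_add (dvd_smul_of_dvd _ hc₀) (dvd_smul_of_dvd _ hc₁)
  have hzero := eq_zero_of_isRelPrime_of_mul_pderiv_add_mul_pderiv (hh.isHomogeneous i₀) hi₀ he hrel
    (isHomogeneous_sum_smul_pderiv hf a) (isHomogeneous_sum_smul_pderiv hf b) (by omega)
    fun j => by
      rw [pderiv_sum_smul_pderiv, pderiv_sum_smul_pderiv, ← hhf j, Finset.mul_sum, Finset.mul_sum,
        ← Finset.sum_add_distrib]
      refine Finset.sum_congr rfl fun i _ => ?_
      rw [← hab i, add_mul, mul_smul_comm, mul_smul_comm, smul_mul_assoc, smul_mul_assoc]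
  intro hbot
  have ha : a = 0 := (Submodule.mem_bot k).1 (hbot ▸ mem_vertex.2 hzero.1)
  have hb : b = 0 := (Submodule.mem_bot k).1 (hbot ▸ mem_vertex.2 hzero.2)
  exact hi₀ (by simpa [ha, hb] using (hab i₀).symm)

lemma vertex_ne_bot_of_isHomogeneous_zero {f : MvPolynomial σ k} {d : ℕ} (hd : 2 ≤ d)
    (hf : f.IsHomogeneous d) {h : σ → MvPolynomial σ k} (hh : ∀ i, (h i).IsHomogeneous 0)
    {i₀ : σ} (hi₀ : h i₀ ≠ 0) (hhf : ∀ j, ∑ i, h i * pderiv i (pderiv j f) = 0) :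
    vertex f ≠ ⊥ := by
  choose c hc using fun i => exists_eq_C_of_isHomogeneous_zero (hh i)
  have hmem : c ∈ vertex f := by
    refine mem_vertex.2 (eq_zero_of_forall_pderiv_eq_zero (n := d - 1) (by omega)
      (isHomogeneous_sum_smul_pderiv hf c) fun j => ?_)
    rw [pderiv_sum_smul_pderiv, ← hhf j]
    exact Finset.sum_congr rfl fun i _ => by rw [hc, smul_eq_C_mul]
  refine (Submodule.ne_bot_iff _).2 ⟨c, hmem, fun hzero => hi₀ ?_⟩
  rw [hc, hzero, Pi.zero_apply, C_0]

-- On four variables, the complement of `{l}` is a pair together with one more index.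
lemma IsReducedSelfVanishing.not_algebraicIndepOn_insert_pair
    {h : Fin 4 → MvPolynomial (Fin 4) k} {e : ℕ} (hh : IsReducedSelfVanishing h e) (he : e ≠ 0)
    {i₀ i₁ j : Fin 4} (hi : i₀ ≠ i₁) (hj : j ∉ ({i₀, i₁} : Set (Fin 4))) :
    ¬ AlgebraicIndepOn k h (insert j {i₀, i₁}) := by
  obtain ⟨l, hl⟩ : ∃ l : Fin 4, ({l}ᶜ : Set (Fin 4)) = insert j {i₀, i₁} := by
    have hcard : (insert j {i₀, i₁} : Finset (Fin 4))ᶜ.card = 1 := by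
      rw [Finset.card_compl, Finset.card_insert_of_notMem (by simpa using hj),
        Finset.card_pair hi, Fintype.card_fin]
    obtain ⟨l, hl⟩ := Finset.card_eq_one.1 hcard
    refine ⟨l, ?_⟩
    rw [← Finset.coe_singleton, ← hl, Finset.coe_compl, compl_compl, Finset.coe_insert,
      Finset.coe_pair]
  rw [← hl]
  exact not_algebraicIndepOn_compl_of_isUnit_of_dvd (hh.aeval_self he) hh.exists_ne_zero
    hh.isUnit_of_dvd l

theorem vertex_ne_bot_of_hessianDet_eq_zero [IsAlgClosed k] {f : MvPolynomial (Fin 4) k} {d : ℕ}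
    (hd : 2 ≤ d) (hf : f.IsHomogeneous d) (hdet : hessianDet f = 0) : vertex f ≠ ⊥ := by
  obtain ⟨e, h, hh, hhf⟩ := exists_isReducedSelfVanishing_of_hessian_eq_zero hd hf hdet
  obtain rfl | he := eq_or_ne e 0
  · obtain ⟨i₀, hi₀⟩ := hh.exists_ne_zero
    exact vertex_ne_bot_of_isHomogeneous_zero hd hf hh.isHomogeneous hi₀ hhf
  obtain ⟨i₀, i₁, hlin⟩ := hh.exists_linearIndependent_pair he
  have hi₀ : h i₀ ≠ 0 := hlin.ne_zero 0
  have hi : i₀ ≠ i₁ := by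
    rintro rfl
    exact zero_ne_one (hlin.injective (a₁ := 0) (a₂ := 1) rfl)
  obtain ⟨P, m, hP⟩ := exists_isFibreComponent he hh.isHomogeneous hh.mkDerivation_self hlin
    (algebraicIndepOn_pair he hh.isHomogeneous hlin)
    fun j => hh.not_algebraicIndepOn_insert_pair he hi
  refine vertex_ne_bot_of_mem_span_pair hd hf he hh hhf hi₀
    (mem_span_pair_of_card_le_finrank_ker_add_two hlin ?_)
  simpa using hP.two_le_finrank_ker hi₀

end Vertex

section LinearFactors

variable {σ k : Type*} [Field k]

lemma ne_smul_of_squarefree_prod {ι : Type*} [Fintype ι] {l : ι → MvPolynomial σ k}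
    (hl : ∀ i, (l i).IsHomogeneous 1) (hsf : Squarefree (∏ i, l i)) {i j : ι} (hij : i ≠ j)
    (c : k) : l i ≠ c • l j := by
  classical
  intro hc
  have hdvd : l i * l j ∣ ∏ i, l i := by
    rw [← Finset.prod_pair hij]
    exact Finset.prod_dvd_prod_of_subset _ _ _ (Finset.subset_univ _)
  have hunit : IsUnit (l j) := (squarefree_mul_iff.1 (hsf.squarefree_of_dvd hdvd)).1
    (hc ▸ dvd_smul_of_dvd c dvd_rfl) dvd_rfl
  exact one_ne_zero (eq_zero_of_dvd_of_degree_lt (hl j) (isHomogeneous_one σ k) one_pos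
    hunit.dvd)

lemma exists_eq_prod_of_pderiv_eq_zero [IsAlgClosed k] [CharZero k] {g : MvPolynomial σ k} {n : ℕ}
    (hn : n ≠ 0) (hg : g.IsHomogeneous n) {i j : σ} (hij : i ≠ j)
    (hpderiv : ∀ l, l ≠ i → l ≠ j → pderiv l g = 0) :
    ∃ l : Fin n → MvPolynomial σ k, (∀ i, (l i).IsHomogeneous 1) ∧ g = ∏ i, l i := by
  have hinj : Function.Injective ![i, j] := injective_pair_iff_ne.2 hij
  obtain ⟨q, rfl⟩ := exists_rename_eq_of_vars_subset_range g ![i, j] hinj fun l hl => by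
    by_contra hmem
    simp only [Matrix.range_cons_cons_empty, Set.mem_insert_iff, Set.mem_singleton_iff,
      not_or] at hmem
    exact notMem_vars_of_pderiv_eq_zero (hpderiv l hmem.1 hmem.2) hl
  obtain ⟨l, hl, rfl⟩ := exists_eq_prod_of_isHomogeneous_fin_two hn
    ((IsHomogeneous.rename_isHomogeneous_iff hinj).1 hg)
  exact ⟨fun i => rename _ (l i), fun i => (hl i).rename_isHomogeneous, map_prod _ _ _⟩

end LinearFactors

section LinearSubstitution

variable {σ k : Type*} [Fintype σ]

section CommRing

variable [CommRing k]

/-- The substitution `f(x) ↦ f(T x)`. -/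
noncomputable def linearSubst (T : Matrix σ σ k) : MvPolynomial σ k →ₐ[k] MvPolynomial σ k :=
  aeval fun i => ∑ j, C (T i j) * X j

lemma linearSubst_X (T : Matrix σ σ k) (i : σ) : linearSubst T (X i) = ∑ j, C (T i j) * X j := by
  rw [linearSubst, aeval_X]

lemma isHomogeneous_linearSubst (T : Matrix σ σ k) {f : MvPolynomial σ k} {d : ℕ}
    (hf : f.IsHomogeneous d) : (linearSubst T f).IsHomogeneous d := by
  have hlin (i : σ) : (∑ j, C (T i j) * X j : MvPolynomial σ k).IsHomogeneous 1 :=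
    IsHomogeneous.sum _ _ _ fun j _ => (isHomogeneous_X k j).C_mul _
  rw [linearSubst, ← one_mul d]
  exact hf.aeval _ hlin

lemma pderiv_linearSubst (T : Matrix σ σ k) (f : MvPolynomial σ k) (j : σ) :
    pderiv j (linearSubst T f) = linearSubst T (∑ i, T i j • pderiv i f) := by
  classical
  have hpderiv (i : σ) : pderiv j (∑ l, C (T i l) * X l) = C (T i j) := by
    simp [pderiv_X, Pi.single_apply]
  rw [linearSubst, derivation_aeval_eq_sum, map_sum]
  refine Finset.sum_congr rfl fun i _ => ?_
  rw [hpderiv, map_smul, smul_eq_C_mul, mul_comm]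

lemma linearSubst_linearSubst (S T : Matrix σ σ k) (f : MvPolynomial σ k) :
    linearSubst S (linearSubst T f) = linearSubst (T * S) f := by
  suffices hcomp : (linearSubst S).comp (linearSubst T) = linearSubst (T * S) from
    DFunLike.congr_fun hcomp f
  refine algHom_ext fun i => ?_
  simp only [AlgHom.comp_apply, linearSubst_X, map_sum, map_mul, algHom_C, algebraMap_eq,
    Finset.mul_sum, Matrix.mul_apply, Finset.sum_mul, mul_assoc]
  exact Finset.sum_comm

variable [DecidableEq σ]

lemma linearSubst_one (f : MvPolynomial σ k) : linearSubst 1 f = f := by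
  suffices hid : linearSubst (1 : Matrix σ σ k) = AlgHom.id k _ from DFunLike.congr_fun hid f
  exact algHom_ext fun i => by simp [linearSubst_X, Matrix.one_apply]

lemma linearSubst_nonsing_inv_linearSubst {T : Matrix σ σ k} (hT : IsUnit T.det)
    (f : MvPolynomial σ k) : linearSubst T⁻¹ (linearSubst T f) = f := by
  rw [linearSubst_linearSubst, Matrix.mul_nonsing_inv T hT, linearSubst_one]

end CommRing

section Field

variable [Field k]

lemma mem_vertex_linearSubst_iff [DecidableEq σ] {T : Matrix σ σ k} (hT : IsUnit T.det)
    {f : MvPolynomial σ k} {a : σ → k} :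
    a ∈ vertex (linearSubst T f) ↔ T.mulVec a ∈ vertex f := by
  have hinj : Function.Injective (linearSubst T) :=
    Function.LeftInverse.injective (linearSubst_nonsing_inv_linearSubst hT)
  have hsum : ∑ j, a j • pderiv j (linearSubst T f) =
      linearSubst T (∑ i, T.mulVec a i • pderiv i f) := by
    simp only [pderiv_linearSubst, map_sum, map_smul, Finset.smul_sum, Matrix.mulVec, dotProduct,
      Finset.sum_smul, smul_smul]
    rw [Finset.sum_comm]
    simp only [mul_comm]
  rw [mem_vertex, mem_vertex, hsum, map_eq_zero_iff _ hinj]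

lemma exists_linearEquiv_map_eq_of_finrank_eq {E : Type*} [AddCommGroup E] [Module k E]
    [FiniteDimensional k E] {V W : Submodule k E} (h : Module.finrank k V = Module.finrank k W) :
    ∃ e : E ≃ₗ[k] E, V.map (e : E →ₗ[k] E) = W := by
  obtain ⟨V', hV⟩ := V.exists_isCompl
  obtain ⟨W', hW⟩ := W.exists_isCompl
  have h' : Module.finrank k V' = Module.finrank k W' := by
    have hV_add := Submodule.finrank_add_eq_of_isCompl hV
    have hW_add := Submodule.finrank_add_eq_of_isCompl hW
    omega
  let e : E ≃ₗ[k] E := (V.prodEquivOfIsCompl V' hV).symm ≪≫ₗ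
    (LinearEquiv.ofFinrankEq V W h).prodCongr (LinearEquiv.ofFinrankEq V' W' h') ≪≫ₗ
    W.prodEquivOfIsCompl W' hW
  refine ⟨e, Submodule.eq_of_le_of_finrank_eq ?_ ?_⟩
  · rintro - ⟨v, hv, rfl⟩
    have hsymm := Submodule.prodEquivOfIsCompl_symm_apply_left V V' hV ⟨v, hv⟩
    simp only at hsymm
    simp [e, hsymm]
  · rw [← h]
    exact e.finrank_map_eq V

lemma exists_le_finrank_eq_of_le_finrank {E : Type*} [AddCommGroup E] [Module k E]
    {V : Submodule k E} {n : ℕ} (hn : n ≤ Module.finrank k V) :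
    ∃ W ≤ V, Module.finrank k W = n := by
  obtain ⟨w, hw⟩ := exists_linearIndependent_of_le_finrank hn
  have hlin : LinearIndependent k fun i => (w i : E) := hw.map' V.subtype V.ker_subtype
  refine ⟨Submodule.span k (Set.range fun i => (w i : E)), ?_, ?_⟩
  · exact Submodule.span_le.2 (Set.range_subset_iff.2 fun i => (w i).2)
  · rw [finrank_span_eq_card hlin, Fintype.card_fin]

lemma exists_isUnit_det_mulVec_mem_iff [DecidableEq σ] (W : Submodule k (σ → k)) (I : Finset σ)
    (hI : I.card = Module.finrank k W) :
    ∃ T : Matrix σ σ k, IsUnit T.det ∧ ∀ a, T.mulVec a ∈ W ↔ ∀ i ∉ I, a i = 0 := by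
  let V : Submodule k (σ → k) := ⨅ i ∈ (Iᶜ : Set σ), LinearMap.ker (LinearMap.proj i)
  have hV : Module.finrank k V = I.card := by
    simpa using (LinearMap.iInfKerProjEquiv k (fun _ : σ => k) (I := (I : Set σ))
      (J := (Iᶜ : Set σ)) disjoint_compl_right (by simp)).finrank_eq
  obtain ⟨e, he⟩ := exists_linearEquiv_map_eq_of_finrank_eq (hV.trans hI)
  refine ⟨LinearMap.toMatrix' e, ?_, fun a => ?_⟩
  · rw [LinearMap.det_toMatrix']
    exact e.isUnit_det'
  · rw [LinearMap.toMatrix'_mulVec]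
    have hmem : e a ∈ W ↔ a ∈ V := by
      rw [← he]
      exact e.injective.mem_set_image
    simpa [V, Submodule.mem_iInf] using hmem

lemma exists_linearSubst_eq_prod [IsAlgClosed k] [CharZero k] {f : MvPolynomial (Fin 4) k} {d : ℕ}
    (hd : d ≠ 0) (hf : f ≠ 0) (hhom : f.IsHomogeneous d)
    (hvertex : 2 ≤ Module.finrank k (vertex f)) :
    ∃ T : Matrix (Fin 4) (Fin 4) k, IsUnit T.det ∧ pderiv 2 (linearSubst T f) = 0 ∧
      pderiv 3 (linearSubst T f) = 0 ∧
      ∃ ℓ : Fin d → MvPolynomial (Fin 4) k, (∀ i, (ℓ i).IsHomogeneous 1) ∧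
        (∃ W : Submodule k (Fin 4 → k), Module.finrank k W = 2 ∧
          ∀ i, ∀ w ∈ W, eval w (ℓ i) = 0) ∧
        f = ∏ i, ℓ i := by
  obtain ⟨W, hWf, hW⟩ := exists_le_finrank_eq_of_le_finrank hvertex
  obtain ⟨T, hT, hTW⟩ := exists_isUnit_det_mulVec_mem_iff W {2, 3} hW.symm
  have hpderiv {j : Fin 4} (hj : j ∈ ({2, 3} : Finset (Fin 4))) :
      pderiv j (linearSubst T f) = 0 := by
    rw [← single_mem_vertex_iff, mem_vertex_linearSubst_iff hT]
    refine hWf ((hTW _).2 fun i hi => Pi.single_eq_of_ne ?_ _)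
    exact fun hij => hi (hij ▸ hj)
  obtain ⟨ℓ, hℓ, hprod⟩ := exists_eq_prod_of_pderiv_eq_zero hd (isHomogeneous_linearSubst T hhom)
    (zero_ne_one (α := Fin 4)) fun l h₀ h₁ => hpderiv (by revert l; decide)
  have hf_prod : f = ∏ i, linearSubst T⁻¹ (ℓ i) := by
    rw [← map_prod, ← hprod, linearSubst_nonsing_inv_linearSubst hT]
  have hℓ' (i : Fin d) : (linearSubst T⁻¹ (ℓ i)).IsHomogeneous 1 :=
    isHomogeneous_linearSubst _ (hℓ i)
  refine ⟨T, hT, hpderiv (by decide), hpderiv (by decide), _, hℓ', ⟨W, hW, fun i w hw => ?_⟩,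
    hf_prod⟩
  exact eval_eq_zero_of_mem_vertex (hℓ' i)
    (vertex_le_of_dvd hf (hf_prod ▸ Finset.dvd_prod_of_mem _ (Finset.mem_univ i)) (hWf hw))

lemma exists_linearSubst_linearIndependent_pderiv {n : ℕ} {f : MvPolynomial (Fin (n + 1)) k}
    (hvertex : Module.finrank k (vertex f) = 1) :
    ∃ T : Matrix (Fin (n + 1)) (Fin (n + 1)) k, IsUnit T.det ∧
      pderiv (Fin.last n) (linearSubst T f) = 0 ∧
      LinearIndependent k fun i : Fin n => pderiv i.castSucc (linearSubst T f) := by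
  obtain ⟨T, hT, hTv⟩ := exists_isUnit_det_mulVec_mem_iff (vertex f) {Fin.last n} hvertex.symm
  have hmem (a : Fin (n + 1) → k) :
      a ∈ vertex (linearSubst T f) ↔ ∀ i : Fin n, a i.castSucc = 0 := by
    simp [mem_vertex_linearSubst_iff hT, hTv, Fin.forall_fin_succ', Fin.castSucc_ne_last]
  have hlast : pderiv (Fin.last n) (linearSubst T f) = 0 :=
    single_mem_vertex_iff.1 ((hmem _).2 fun i => Pi.single_eq_of_ne i.castSucc_ne_last _)
  refine ⟨T, hT, hlast, Fintype.linearIndependent_iff.2 fun c hc i => ?_⟩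
  have hsnoc : (Fin.snoc c 0 : Fin (n + 1) → k) ∈ vertex (linearSubst T f) := by
    rw [mem_vertex, Fin.sum_univ_castSucc, hlast, smul_zero, add_zero]
    simpa only [Fin.snoc_castSucc] using hc
  simpa only [Fin.snoc_castSucc] using (hmem _).1 hsnoc i

end Field

end LinearSubstitution

/-- Classification of hypersurfaces in `ℙ³` with vanishing Hessian: such a hypersurface
either consists of `d` distinct planes through a line, or is a cone over a plane curve
with vertex exactly a point. -/
theorem stmt3 {k : Type*} [Field k] [IsAlgClosed k] [CharZero k]
    (f : MvPolynomial (Fin 4) k) (d : ℕ) (hd : 3 ≤ d)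
    (hsf : Squarefree f) (hhom : f.IsHomogeneous d)
    (hhess : hessianDet f = 0) :
    (∃ T : Matrix (Fin 4) (Fin 4) k, IsUnit T.det ∧
      pderiv 2 (aeval (fun i => ∑ j, C (T i j) * X j) f) = 0 ∧
      pderiv 3 (aeval (fun i => ∑ j, C (T i j) * X j) f) = 0 ∧
      ∃ ℓ : Fin d → MvPolynomial (Fin 4) k,
        (∀ i, (ℓ i).IsHomogeneous 1) ∧
        (∀ i j, i ≠ j → ∀ c : k, ℓ i ≠ c • ℓ j) ∧
        (∃ W : Submodule k (Fin 4 → k), Module.finrank k W = 2 ∧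
          ∀ i, ∀ w ∈ W, eval w (ℓ i) = 0) ∧
        f = ∏ i, ℓ i) ∨
    (∃ T : Matrix (Fin 4) (Fin 4) k, IsUnit T.det ∧
      pderiv 3 (aeval (fun i => ∑ j, C (T i j) * X j) f) = 0 ∧
      LinearIndependent k (fun i : Fin 3 =>
        pderiv (Fin.castSucc i) (aeval (fun i => ∑ j, C (T i j) * X j) f))) := by
  have hvertex : 1 ≤ Module.finrank k (vertex f) :=
    Submodule.one_le_finrank_iff.2 (vertex_ne_bot_of_hessianDet_eq_zero (by omega) hhom hhess)
  obtain hone | htwo := hvertex.eq_or_lt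
  · exact .inr (exists_linearSubst_linearIndependent_pderiv hone.symm)
  · obtain ⟨T, hT, h₂, h₃, ℓ, hℓ, hW, hprod⟩ :=
      exists_linearSubst_eq_prod (by omega) hsf.ne_zero hhom htwo
    exact .inl ⟨T, hT, h₂, h₃, ℓ, hℓ,
      fun i j hij => ne_smul_of_squarefree_prod hℓ (hprod ▸ hsf) hij, hW, hprod⟩
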